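/- arXiv:0807.1170 — 5 statements merged into one kernel-verified Lean document; each statement's English description precedes it below -/
import Mathlib

section
/- Let p be an odd prime, K a finite extension of ℚ_p, and let d, e ∈ K* be non-squares with de ∉ (K*)² (so L = K(√d) and E = K(√e) are non-isomorphic quadratic extensions of K). Then either −e ∉ N_{L/K}(L*), or there exists x ∈ K* with x ∉ N_{L/K}(L*) and x² − e ∉ N_{L/K}(L*). -/
open Module

/-- `normGroup K L` is the set of norms `N_{L/K}(t)` of nonzero elements `t ∈ L`. -/
def normGroup (K L : Type*) [Field K] [Field L] [Algebra K L] : Set K :=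
  {x : K | ∃ t : L, t ≠ 0 ∧ Algebra.norm K t = x}

/-!
Let `N` be the norm group of `L = K(√d)`. It contains the squares and is proper, and `K*/(K*)²` is
a Klein four-group, so the image of `N` there has order at most `2`: of any two elements of `N`,
one is a square or their product is. Suppose `-e ∈ N`. Since `-d ∈ N`, having `-1 ∈ N` would put
both `d` and `e` in `N`, which is impossible as `d`, `e` and `d e` are non-squares; so `-1 ∉ N`.
Write `-1 = y² + z²`. If `-d` were a square, this would make `-1` a norm. Hence, applying the same
principle to `-d` and `-e`, whose product is not a square, `-e = r²`. Then `x = ± r y`, with the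
sign chosen so that `x ∉ N`, works, because `x² - e = r² (y² + 1) = - (r z)²`.

That `N` is proper comes from the unramified extension `K(√g)`, with `g` a unit whose residue is
not a square: no uniformizer is a norm from it. The symmetry of the Hilbert symbol (for
non-squares `x` and `d`, `x` is a norm from `K(√d)` iff `d` is one from `K(√x)`) carries this over
to every `d`.
-/

open IsLocalRing IsLocalization ValuativeRel

section KleinFour

variable {G : Type*} [Group G] {a b : G}

theorem isKleinFour_of_forall_eq (ha : a ≠ 1) (hb : b ≠ 1) (hab : a ≠ b)
    (hsq : ∀ x : G, x * x = 1) (hG : ∀ x : G, x = 1 ∨ x = a ∨ x = b ∨ x = a * b) :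
    IsKleinFour G := by
  classical
  have : Nontrivial G := ⟨a, 1, ha⟩
  have hab1 : a * b ≠ 1 := fun h ↦ hab (mul_right_cancel (h.trans (hsq b).symm))
  let univ : Finset G := {1, a, b, a * b}
  let _ : Fintype G := ⟨univ, by simpa [univ] using hG⟩
  have card_univ : univ.card = 4 := by
    simp [univ, Finset.card_insert_of_notMem, ha, hb, hab, ha.symm, hb.symm, hab1.symm]
  exact ⟨Nat.card_eq_fintype_card.trans card_univ,
    (Monoid.exponent_eq_prime_iff Nat.prime_two).2 fun x hx ↦
      orderOf_eq_prime (by rw [sq, hsq]) hx⟩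

theorem eq_one_or_eq_one_or_eq_of_mem [IsKleinFour G] {H : Subgroup G} (hH : H ≠ ⊤)
    (ha : a ∈ H) (hb : b ∈ H) : a = 1 ∨ b = 1 ∨ a = b := by
  classical
  by_contra! ⟨ha1, hb1, hab⟩
  have := Nat.finite_of_card_ne_zero (IsKleinFour.card_four (G := G) ▸ four_ne_zero)
  have := Fintype.ofFinite G
  refine hH ((Subgroup.eq_top_iff' H).2 fun x ↦ ?_)
  have hx : x ∈ ({a * b, a, b, 1} : Finset G) := by
    simp only [IsKleinFour.eq_finset_univ ha1 hb1 hab, Finset.mem_univ]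
  simp only [Finset.mem_insert, Finset.mem_singleton] at hx
  rcases hx with rfl | rfl | rfl | rfl
  exacts [H.mul_mem ha hb, ha, hb, H.one_mem]

end KleinFour

/-- The group of square classes of a commutative group `G`; for `G = Kˣ` it is `K*/(K*)²`. -/
abbrev SquareClass (G : Type*) [CommGroup G] : Type _ := G ⧸ Subgroup.square G

namespace SquareClass

variable {G : Type*} [CommGroup G] {a b : G}

theorem mk_eq_one_iff : (a : SquareClass G) = 1 ↔ IsSquare a :=
  QuotientGroup.eq_one_iff a

theorem mul_self (x : SquareClass G) : x * x = 1 := by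
  induction x using QuotientGroup.induction_on with
  | H a => exact mk_eq_one_iff.2 ⟨a, rfl⟩

theorem mk_eq_mk_iff : (a : SquareClass G) = b ↔ IsSquare (a * b) := by
  rw [← mk_eq_one_iff, QuotientGroup.mk_mul, ← mul_left_inj (b : SquareClass G), mul_self]

theorem mem_of_isSquare_mul {H : Subgroup G} (hsq : Subgroup.square G ≤ H)
    (hab : IsSquare (a * b)) (ha : a ∈ H) : b ∈ H :=
  (H.mul_mem_cancel_left ha).1 (hsq hab)

theorem isSquare_of_mem_of_ne_top [IsKleinFour (SquareClass G)] {H : Subgroup G}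
    (hsq : Subgroup.square G ≤ H) (hH : H ≠ ⊤) (ha : a ∈ H) (hb : b ∈ H) :
    IsSquare a ∨ IsSquare b ∨ IsSquare (a * b) := by
  let q := QuotientGroup.mk' (Subgroup.square G)
  have hcomap : (H.map q).comap q = H := by
    rw [Subgroup.comap_map_eq, QuotientGroup.ker_mk', sup_eq_left.2 hsq]
  have hmap : H.map q ≠ ⊤ := fun h ↦ hH (by rw [← hcomap, h, Subgroup.comap_top])
  rw [← mk_eq_one_iff, ← mk_eq_one_iff, ← mk_eq_mk_iff]
  exact eq_one_or_eq_one_or_eq_of_mem hmap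
    (Subgroup.mem_map_of_mem q ha) (Subgroup.mem_map_of_mem q hb)

end SquareClass

open SquareClass

theorem isSquare_val_iff {M : Type*} [CommMonoid M] {u : Mˣ} : IsSquare (u : M) ↔ IsSquare u := by
  refine ⟨fun ⟨r, hr⟩ ↦ ?_, fun h ↦ h.map (Units.coeHom M)⟩
  have hr' : IsUnit r := isUnit_of_mul_isUnit_left (hr ▸ u.isUnit)
  exact ⟨hr'.unit, Units.ext hr⟩

theorem algebraNorm_quadraticAlgebra {R : Type*} [CommRing R] {a b : R}
    (z : QuadraticAlgebra R a b) : Algebra.norm R z = z.norm :=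
  QuadraticAlgebra.det_toLinearMap_eq_norm z

section QuadraticNorms

variable {K : Type*} [Field K]

/-- The subgroup of `Kˣ` of norms from `K[√d]`, i.e. of nonzero values of `a² - d b²`. The algebra
`K[√d]` is `QuadraticAlgebra K d 0`, which need not be a field. -/
def quadraticNorms (d : K) : Subgroup Kˣ :=
  (Units.map (QuadraticAlgebra.norm : QuadraticAlgebra K d 0 →* K)).range

theorem nonempty_algEquiv_quadraticAlgebra {L : Type*} [Field L] [Algebra K L]
    (hL2 : finrank K L = 2) {d : K} (hd : ¬ IsSquare d) {s : L} (hs : s ^ 2 = algebraMap K L d) :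
    Nonempty (QuadraticAlgebra K d 0 ≃ₐ[K] L) := by
  have : Fact (∀ r : K, r ^ 2 ≠ d + 0 * r) := ⟨fun r hr ↦ hd ⟨r, by linear_combination -hr⟩⟩
  have : FiniteDimensional K L := .of_finrank_pos (by omega)
  let f : QuadraticAlgebra K d 0 →ₐ[K] L :=
    QuadraticAlgebra.lift ⟨s, by simpa [← sq, Algebra.algebraMap_eq_smul_one] using hs⟩
  have hfinrank : finrank K (QuadraticAlgebra K d 0) = finrank K L := by
    rw [hL2, QuadraticAlgebra.finrank_eq_two]
  exact ⟨.ofBijective f ⟨f.injective,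
    (LinearMap.injective_iff_surjective_of_finrank_eq_finrank (f := f.toLinearMap) hfinrank).1
      f.injective⟩⟩

theorem mem_normGroup_iff {L : Type*} [Field L] [Algebra K L] {d : K}
    (φ : QuadraticAlgebra K d 0 ≃ₐ[K] L) {u : Kˣ} :
    (u : K) ∈ normGroup K L ↔ u ∈ quadraticNorms d := by
  have hnorm (z : QuadraticAlgebra K d 0) : Algebra.norm K (φ z) = z.norm := by
    rw [Algebra.norm_eq_of_algEquiv, algebraNorm_quadraticAlgebra]
  constructor
  · rintro ⟨t, ht0, ht⟩
    have hz : IsUnit (φ.symm t) := (isUnit_iff_ne_zero.2 ht0).map φ.symm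
    exact ⟨hz.unit, Units.ext (by simp [← hnorm, ht])⟩
  · rintro ⟨z, rfl⟩
    exact ⟨φ z, (z.isUnit.map φ).ne_zero, hnorm z⟩

theorem mem_quadraticNorms {d : K} {u : Kˣ} :
    u ∈ quadraticNorms d ↔ ∃ a b : K, a ^ 2 - d * b ^ 2 = u := by
  have norm_mk (a b : K) :
      QuadraticAlgebra.norm (⟨a, b⟩ : QuadraticAlgebra K d 0) = a ^ 2 - d * b ^ 2 := by
    rw [QuadraticAlgebra.norm_def]
    ring
  constructor
  · rintro ⟨z, rfl⟩
    exact ⟨z.val.re, z.val.im, (norm_mk _ _).symm⟩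
  · rintro ⟨a, b, hab⟩
    have hz := QuadraticAlgebra.isUnit_iff_norm_isUnit.2 ((norm_mk a b).trans hab ▸ u.isUnit)
    exact ⟨hz.unit, Units.ext ((norm_mk a b).trans hab)⟩

theorem square_le_quadraticNorms (d : K) : Subgroup.square Kˣ ≤ quadraticNorms d := by
  rintro _ ⟨r, rfl⟩
  exact mem_quadraticNorms.2 ⟨r, 0, by push_cast; ring⟩

theorem neg_mem_quadraticNorms (d : Kˣ) : -d ∈ quadraticNorms (d : K) :=
  mem_quadraticNorms.2 ⟨0, 1, by push_cast; ring⟩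

theorem mem_quadraticNorms_symm {d x : Kˣ} (hx : ¬ IsSquare x) (h : x ∈ quadraticNorms (d : K)) :
    d ∈ quadraticNorms (x : K) := by
  obtain ⟨a, b, hab⟩ := mem_quadraticNorms.1 h
  have hb : b ≠ 0 := by
    rintro rfl
    exact hx (isSquare_val_iff.1 ⟨a, by linear_combination -hab⟩)
  refine mem_quadraticNorms.2 ⟨a / b, 1 / b, ?_⟩
  field_simp
  linear_combination hab

theorem neg_one_mem_quadraticNorms {d : Kˣ} (hd : IsSquare (-d))
    (hsum : ∃ y z : K, y ^ 2 + z ^ 2 = -1) : -1 ∈ quadraticNorms (d : K) := by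
  obtain ⟨t, ht⟩ := hd
  obtain ⟨y, z, hyz⟩ := hsum
  have ht' : -(d : K) = t * t := by rw [← Units.val_neg, ht, Units.val_mul]
  refine mem_quadraticNorms.2 ⟨y, z / t, ?_⟩
  rw [Units.val_neg, Units.val_one]
  field_simp
  linear_combination (t : K) ^ 2 * hyz + z ^ 2 * ht'

section KleinFour

variable [IsKleinFour (SquareClass Kˣ)] {d e : Kˣ}

theorem neg_one_notMem_quadraticNorms (hd : ¬ IsSquare d) (he : ¬ IsSquare e)
    (hde : ¬ IsSquare (d * e)) (hN : quadraticNorms (d : K) ≠ ⊤)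
    (hne : -e ∈ quadraticNorms (d : K)) : -1 ∉ quadraticNorms (d : K) := by
  intro hneg
  have mem_of_neg_mem {x : Kˣ} (hx : -x ∈ quadraticNorms (d : K)) : x ∈ quadraticNorms (d : K) := by
    simpa using mul_mem hneg hx
  rcases isSquare_of_mem_of_ne_top (square_le_quadraticNorms _) hN
    (mem_of_neg_mem (neg_mem_quadraticNorms d)) (mem_of_neg_mem hne) with h | h | h
  exacts [hd h, he h, hde h]

theorem isSquare_neg_of_neg_mem_quadraticNorms (hde : ¬ IsSquare (d * e))
    (hN : quadraticNorms (d : K) ≠ ⊤) (hneg : -1 ∉ quadraticNorms (d : K))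
    (hsum : ∃ y z : K, y ^ 2 + z ^ 2 = -1) (hne : -e ∈ quadraticNorms (d : K)) :
    IsSquare (-e) := by
  rcases isSquare_of_mem_of_ne_top (square_le_quadraticNorms _) hN
    (neg_mem_quadraticNorms d) hne with h | h | h
  · exact absurd (neg_one_mem_quadraticNorms h hsum) hneg
  · exact h
  · exact absurd (by rwa [neg_mul_neg] at h) hde

end KleinFour

-- If `y² + z² = -1`, then `(± r y)² + r² = -(r z)²`.
theorem exists_notMem_sq_add_sq_notMem {N : Subgroup Kˣ} (hsq : Subgroup.square Kˣ ≤ N)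
    (hneg : -1 ∉ N) (hsum : ∃ y z : K, y ^ 2 + z ^ 2 = -1) (r : Kˣ) :
    ∃ x w : Kˣ, x ∉ N ∧ w ∉ N ∧ (w : K) = x ^ 2 + r ^ 2 := by
  have neg_notMem {x : Kˣ} (hx : x ∈ N) : -x ∉ N := fun hx' ↦
    hneg (by simpa using N.mul_mem (N.inv_mem hx) hx')
  have ne_neg_one (t : K) : t ^ 2 ≠ -1 := fun ht ↦
    hneg (hsq (isSquare_val_iff.1 ⟨t, by rw [← sq, ht, Units.val_neg, Units.val_one]⟩))
  obtain ⟨y, z, hyz⟩ := hsum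
  lift y to Kˣ using isUnit_iff_ne_zero.2 (by rintro rfl; exact ne_neg_one z (by simpa using hyz))
  lift z to Kˣ using isUnit_iff_ne_zero.2 (by rintro rfl; exact ne_neg_one y (by simpa using hyz))
  have hw : -(r * z) ^ 2 ∉ N := neg_notMem (hsq (.sq _))
  have hw' : ((-(r * z) ^ 2 : Kˣ) : K) = (r * y) ^ 2 + r ^ 2 := by
    push_cast
    linear_combination -(r : K) ^ 2 * hyz
  by_cases hx : r * y ∈ N
  · exact ⟨-(r * y), _, neg_notMem hx, hw, by simpa using hw'⟩
  · exact ⟨r * y, _, hx, hw, by simpa using hw'⟩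

end QuadraticNorms


section FiniteField

variable {F : Type*} [Field F] [Finite F]

theorem isSquare_mul_of_not_isSquare {a b : F} (ha : ¬ IsSquare a) (hb : ¬ IsSquare b) :
    IsSquare (a * b) := by
  classical
  have := Fintype.ofFinite F
  have hab : a * b ≠ 0 := mul_ne_zero (by rintro rfl; simp at ha) (by rintro rfl; simp at hb)
  rw [← quadraticChar_one_iff_isSquare hab, map_mul,
    (quadraticChar_neg_one_iff_not_isSquare).2 ha, (quadraticChar_neg_one_iff_not_isSquare).2 hb,
    neg_one_mul, neg_neg]

variable (F) in
theorem exists_ne_zero_sq_add_sq_eq_neg_one : ∃ a b : F, a ≠ 0 ∧ a ^ 2 + b ^ 2 = -1 := by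
  obtain ⟨p, hp⟩ := CharP.exists F
  have : NeZero p := ⟨CharP.char_ne_zero_of_finite F p⟩
  obtain ⟨a, b, hab⟩ := CharP.sq_add_sq F p (-1)
  push_cast at hab
  by_cases ha : (a : F) = 0
  · refine ⟨b, a, fun hb ↦ ?_, by rw [add_comm, hab]⟩
    simp [ha, hb] at hab
  · exact ⟨a, b, ha, hab⟩

end FiniteField

section Residue

variable {R : Type*} [CommRing R]

theorem exists_unit_not_isSquare_residue [IsLocalRing R] [Finite (ResidueField R)]
    (h2 : IsUnit (2 : R)) : ∃ g : Rˣ, ¬ IsSquare (residue R g) := by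
  have hchar : ringChar (ResidueField R) ≠ 2 := fun h ↦ by
    have h2' : ((2 : ℕ) : ResidueField R) = 0 := by rw [← h, ringChar.Nat.cast_ringChar]
    exact (residue_ne_zero_iff_isUnit 2).2 h2 (by rw [map_ofNat]; exact_mod_cast h2')
  obtain ⟨a, ha⟩ := FiniteField.exists_nonsquare hchar
  obtain ⟨g, rfl⟩ := residue_surjective a
  have hg : IsUnit g := (residue_ne_zero_iff_isUnit g).1 fun h ↦ ha (h ▸ .zero)
  exact ⟨hg.unit, ha⟩

variable [HenselianLocalRing R]

theorem isSquare_of_isSquare_residue (h2 : IsUnit (2 : R)) {u : Rˣ}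
    (hu : IsSquare (residue R u)) : IsSquare u := by
  obtain ⟨r, hr⟩ := hu
  obtain ⟨a, rfl⟩ := residue_surjective r
  have ha : IsUnit a := isUnit_of_map_unit (residue R) a
    (isUnit_of_mul_isUnit_left (hr ▸ u.isUnit.map (residue R)))
  have hmem : a ^ 2 - u ∈ maximalIdeal R := by
    rw [← residue_eq_zero_iff, map_sub, map_pow, hr, sq, sub_self]
  obtain ⟨b, hb, -⟩ := HenselianLocalRing.is_henselian (Polynomial.X ^ 2 - Polynomial.C (u : R))
    (Polynomial.monic_X_pow_sub_C _ two_ne_zero) a (by simpa using hmem)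
    (by simpa [one_add_one_eq_two] using h2.mul ha)
  have hb' : b ^ 2 - u = 0 := by simpa using hb
  exact isSquare_val_iff.1 ⟨b, by linear_combination -hb'⟩

variable [Finite (ResidueField R)]

theorem exists_sq_add_sq_eq_neg_one (h2 : IsUnit (2 : R)) : ∃ y z : R, y ^ 2 + z ^ 2 = -1 := by
  obtain ⟨a, b, ha, hab⟩ := exists_ne_zero_sq_add_sq_eq_neg_one (ResidueField R)
  obtain ⟨z, rfl⟩ := residue_surjective b
  have hres : residue R (-1 - z ^ 2) = a * a := by
    simp only [map_sub, map_neg, map_one, map_pow]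
    linear_combination -hab
  have hu : IsUnit (-1 - z ^ 2) := by
    rw [← residue_ne_zero_iff_isUnit, hres]
    exact mul_ne_zero ha ha
  obtain ⟨y, hy⟩ := isSquare_of_isSquare_residue (u := hu.unit) h2 ⟨a, hres⟩
  have hy' : -1 - z ^ 2 = y * y := congrArg Units.val hy
  exact ⟨y, z, by linear_combination -hy'⟩

theorem isSquare_or_isSquare_mul (h2 : IsUnit (2 : R)) {g : Rˣ} (hg : ¬ IsSquare (residue R g))
    (u : Rˣ) : IsSquare u ∨ IsSquare (u * g) := by
  by_cases hu : IsSquare (residue R u)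
  · exact .inl (isSquare_of_isSquare_residue h2 hu)
  · refine .inr (isSquare_of_isSquare_residue h2 ?_)
    rw [Units.val_mul, map_mul]
    exact isSquare_mul_of_not_isSquare hu hg

end Residue

section UnramifiedNorms

variable {R K : Type*} [CommRing R] [IsDomain R] [Field K] [Algebra R K] [IsFractionRing R K]
  {g : R}

theorem isInteger_of_sq_sub_mul_sq_isInteger [ValuationRing R] (hg : ¬ IsSquare (residue R g))
    {a b : K} (h : IsInteger R (a ^ 2 - algebraMap R K g * b ^ 2)) :
    IsInteger R a ∧ IsInteger R b := by
  have isInteger_of_sq {x : K} (hx : IsInteger R (x ^ 2)) : IsInteger R x :=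
    IsIntegrallyClosed.exists_algebraMap_eq_of_isIntegral_pow two_pos
      (IsIntegrallyClosed.isIntegral_iff.2 hx)
  obtain ⟨r, hr⟩ := h
  suffices hb : IsInteger R b by
    obtain ⟨b, rfl⟩ := hb
    exact ⟨isInteger_of_sq ⟨r + g * b ^ 2, by simp [hr]⟩, b, rfl⟩
  by_contra hb
  obtain ⟨c, hc⟩ := (ValuationRing.isInteger_or_isInteger R b).resolve_left hb
  have hb0 : b ≠ 0 := by
    rintro rfl
    exact hb ⟨0, map_zero _⟩
  have hac : (a / b) ^ 2 = algebraMap R K (r * c ^ 2 + g) := by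
    simp only [map_add, map_mul, map_pow, hc, hr]
    field_simp
    ring
  obtain ⟨t, ht⟩ := isInteger_of_sq ⟨_, hac.symm⟩
  have htc : t ^ 2 = r * c ^ 2 + g :=
    IsFractionRing.injective R K (by rw [map_pow, ht, hac])
  have hc0 : residue R c = 0 := by
    rw [residue_eq_zero_iff, mem_maximalIdeal, mem_nonunits_iff]
    exact fun hu ↦ hb ⟨↑hu.unit⁻¹, by rw [← inv_inv b, ← hc]; simp [map_units_inv]⟩
  exact hg ⟨residue R t, by rw [← sq, ← map_pow, htc]; simp [hc0]⟩

theorem not_isSquare_algebraMap [ValuationRing R] (hg : ¬ IsSquare (residue R g)) :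
    ¬ IsSquare (algebraMap R K g) := by
  rintro ⟨r, hr⟩
  obtain ⟨⟨t, rfl⟩, -⟩ := isInteger_of_sq_sub_mul_sq_isInteger hg (a := r) (b := 1)
    ⟨0, by simp [hr, sq]⟩
  rw [← map_mul, (IsFractionRing.injective R K).eq_iff] at hr
  exact hg (hr ▸ (IsSquare.mul_self t).map (residue R))

theorem dvd_of_dvd_sq_sub_mul_sq [IsDiscreteValuationRing R] (hg : ¬ IsSquare (residue R g))
    {ϖ : R} (hϖ : Irreducible ϖ) {a b : R} (h : ϖ ∣ a ^ 2 - g * b ^ 2) : ϖ ∣ a ∧ ϖ ∣ b := by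
  have dvd_iff (x : R) : ϖ ∣ x ↔ residue R x = 0 := by
    rw [residue_eq_zero_iff, hϖ.maximalIdeal_eq, Ideal.mem_span_singleton]
  simp only [dvd_iff, map_sub, map_mul, map_pow] at h ⊢
  by_cases hb : residue R b = 0
  · simpa [hb] using h
  · refine absurd ⟨residue R a / residue R b, ?_⟩ hg
    field_simp
    linear_combination -h

theorem irreducible_notMem_quadraticNorms [IsDiscreteValuationRing R]
    (hg : ¬ IsSquare (residue R g)) {π : Kˣ} {ϖ : R} (hϖ : Irreducible ϖ)
    (hπ : algebraMap R K ϖ = π) : π ∉ quadraticNorms (algebraMap R K g) := by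
  intro h
  obtain ⟨a, b, hab⟩ := mem_quadraticNorms.1 h
  obtain ⟨⟨a, rfl⟩, b, rfl⟩ := isInteger_of_sq_sub_mul_sq_isInteger hg ⟨ϖ, hπ.trans hab.symm⟩
  have hab' : a ^ 2 - g * b ^ 2 = ϖ := IsFractionRing.injective R K (by simp [hab, hπ])
  obtain ⟨⟨a, rfl⟩, b, rfl⟩ := dvd_of_dvd_sq_sub_mul_sq hg hϖ hab'.symm.dvd
  refine hϖ.not_isUnit (.of_mul_eq_one (a ^ 2 - g * b ^ 2) (mul_left_cancel₀ hϖ.ne_zero ?_))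
  linear_combination hab'

end UnramifiedNorms

section LocalField

variable {R K : Type*} [CommRing R] [IsDomain R] [IsDiscreteValuationRing R] [HenselianLocalRing R]
  [Finite (ResidueField R)] [Field K] [Algebra R K] [IsFractionRing R K]

theorem squareClass_eq_one_or_eq (h2 : IsUnit (2 : R)) {g : Rˣ} (hg : ¬ IsSquare (residue R g))
    {γ π : Kˣ} (hγ : algebraMap R K g = γ) {ϖ : R} (hϖ : Irreducible ϖ) (hπ : algebraMap R K ϖ = π)
    (x : SquareClass Kˣ) :
    x = 1 ∨ x = γ ∨ x = π ∨ x = γ * π := by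
  induction x using QuotientGroup.induction_on with
  | H x =>
  obtain ⟨n, u, hx⟩ :=
    IsDiscreteValuationRing.exists_units_eq_smul_zpow_of_irreducible hϖ x.ne_zero
  let υ : Kˣ := Units.map (algebraMap R K : R →* K) u
  have hx' : x = υ * π ^ n := Units.ext (by simp [υ, hx, hπ, Units.smul_def, Algebra.smul_def])
  have hυ : (υ : SquareClass Kˣ) = 1 ∨ (υ : SquareClass Kˣ) = γ := by
    have hγ' : γ = Units.map (algebraMap R K : R →* K) g := Units.ext hγ.symm
    rw [mk_eq_one_iff, mk_eq_mk_iff, hγ', ← map_mul]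
    exact (isSquare_or_isSquare_mul h2 hg u).imp (.map _) (.map _)
  have hπn : (π : SquareClass Kˣ) ^ n = 1 ∨ (π : SquareClass Kˣ) ^ n = π := by
    rcases n.even_or_odd' with ⟨k, rfl | rfl⟩ <;>
      simp [zpow_add, zpow_mul, zpow_ofNat, sq, SquareClass.mul_self]
  rw [hx', QuotientGroup.mk_mul, QuotientGroup.mk_zpow]
  rcases hυ with h | h <;> rcases hπn with h' | h' <;> simp [h, h']

variable (K) in
theorem exists_notMem_quadraticNorms_and_forall_squareClass_eq (h2 : IsUnit (2 : R)) :
    ∃ γ π : Kˣ, ¬ IsSquare γ ∧ π ∉ quadraticNorms (γ : K) ∧ γ * π ∉ quadraticNorms (γ : K) ∧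
      ∀ x : SquareClass Kˣ, x = 1 ∨ x = γ ∨ x = π ∨ x = γ * π := by
  obtain ⟨g, hg⟩ := exists_unit_not_isSquare_residue h2
  obtain ⟨ϖ, hϖ⟩ := IsDiscreteValuationRing.exists_irreducible R
  have hgϖ : Irreducible (g * ϖ : R) := (irreducible_units_mul g).2 hϖ
  let γ : Kˣ := Units.map (algebraMap R K : R →* K) g
  let π : Kˣ := .mk0 (algebraMap R K ϖ) (by simpa using hϖ.ne_zero)
  exact ⟨γ, π, isSquare_val_iff.not.1 (not_isSquare_algebraMap hg),
    irreducible_notMem_quadraticNorms hg hϖ rfl,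
    irreducible_notMem_quadraticNorms hg hgϖ (map_mul _ _ _),
    squareClass_eq_one_or_eq h2 hg rfl hϖ rfl⟩

variable (K) in
theorem isKleinFour_squareClass_units (h2 : IsUnit (2 : R)) : IsKleinFour (SquareClass Kˣ) := by
  obtain ⟨γ, π, hγ, hπ, hγπ, hclass⟩ := exists_notMem_quadraticNorms_and_forall_squareClass_eq K h2
  exact isKleinFour_of_forall_eq (mk_eq_one_iff.not.2 hγ)
    (mk_eq_one_iff.not.2 fun h ↦ hπ (square_le_quadraticNorms _ h))
    (mk_eq_mk_iff.not.2 fun h ↦ hγπ (square_le_quadraticNorms _ h)) SquareClass.mul_self hclass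

theorem quadraticNorms_ne_top (h2 : IsUnit (2 : R)) {d : Kˣ} (hd : ¬ IsSquare d) :
    quadraticNorms (d : K) ≠ ⊤ := by
  intro htop
  have mem_of_not_isSquare {x : Kˣ} (hx : ¬ IsSquare x) : d ∈ quadraticNorms (x : K) :=
    mem_quadraticNorms_symm hx (htop ▸ Subgroup.mem_top x)
  obtain ⟨γ, π, hγ, hπ, hγπ, hclass⟩ := exists_notMem_quadraticNorms_and_forall_squareClass_eq K h2
  have hdγ : d ∈ quadraticNorms (γ : K) := mem_of_not_isSquare hγ
  rcases hclass d with h | h | h | h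
  · exact hd (mk_eq_one_iff.1 h)
  · have hπ' : ¬ IsSquare π := fun h ↦ hπ (square_le_quadraticNorms _ h)
    have hγπ' : γ ∈ quadraticNorms (π : K) :=
      mem_of_isSquare_mul (square_le_quadraticNorms _) (mk_eq_mk_iff.1 h) (mem_of_not_isSquare hπ')
    exact hπ (mem_quadraticNorms_symm hγ hγπ')
  · exact hπ (mem_of_isSquare_mul (square_le_quadraticNorms _) (mk_eq_mk_iff.1 h) hdγ)
  · exact hγπ (mem_of_isSquare_mul (square_le_quadraticNorms _) (mk_eq_mk_iff.1 h) hdγ)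

end LocalField

section Padic

instance (K : Type*) [Field K] [ValuativeRel K] [TopologicalSpace K]
    [IsNonarchimedeanLocalField K] : HenselianLocalRing 𝒪[K] := by
  let := IsTopologicalAddGroup.rightUniformSpace K
  have := isUniformAddGroup_of_addCommGroup (G := K)
  have : HenselianRing 𝒪[K] 𝓂[K] := inferInstance
  exact ⟨fun f hf a h₁ h₂ ↦ HenselianRing.is_henselian f hf a h₁ (h₂.map _)⟩

theorem isNonarchimedeanLocalField_ofValuation (K : Type*) [NontriviallyNormedField K]
    [IsUltrametricDist K] [ProperSpace K] :
    letI := ValuativeRel.ofValuation (NormedField.valuation (K := K))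
    IsNonarchimedeanLocalField K := by
  let v : Valuation K NNReal := NormedField.valuation
  let := ValuativeRel.ofValuation v
  have : v.Compatible := .ofValuation v
  let := NormedField.toValued (K := K)
  have : IsValuativeTopology K := .of_mem_nhds_iff_vle v Valued.mem_nhds
  have : ValuativeRel.IsNontrivial K :=
    (ValuativeRel.isNontrivial_iff_isNontrivial v).2
      (inferInstanceAs (NormedField.valuation (K := K)).IsNontrivial)
  exact {}

theorem exists_isNonarchimedeanLocalField (p : ℕ) [Fact p.Prime] (K : Type*) [Field K]
    [Algebra ℚ_[p] K] [FiniteDimensional ℚ_[p] K] :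
    ∃ (_ : ValuativeRel K) (_ : TopologicalSpace K), IsNonarchimedeanLocalField K ∧
      ∀ n : ℕ, IsUnit (n : 𝒪[K]) ↔ p.Coprime n := by
  let : NontriviallyNormedField K := spectralNorm.nontriviallyNormedField ℚ_[p] K
  let : NormedAlgebra ℚ_[p] K := spectralNorm.normedAlgebra ℚ_[p] K
  have : IsUltrametricDist K := .isUltrametricDist_of_isNonarchimedean_norm
    isNonarchimedean_spectralNorm
  have : ProperSpace K := FiniteDimensional.proper ℚ_[p] K
  let v : Valuation K NNReal := NormedField.valuation
  let : ValuativeRel K := .ofValuation v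
  have : v.Compatible := .ofValuation v
  refine ⟨_, _, isNonarchimedeanLocalField_ofValuation K, fun n ↦ ?_⟩
  have hn : ‖(n : K)‖ = ‖(n : ℚ_[p])‖ := by
    rw [← map_natCast (algebraMap ℚ_[p] K), norm_algebraMap']
  rw [(Valuation.integer.integers (valuation K)).isUnit_iff_valuation_eq_one, map_natCast,
    (ValuativeRel.isEquiv (valuation K) v).eq_one_iff_eq_one, ← Padic.norm_natCast_eq_one_iff, ← hn]
  exact NNReal.coe_eq_one.symm

end Padic

theorem stmt_9_general {R : Type*} [CommRing R] [IsDomain R] [IsDiscreteValuationRing R]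
    [HenselianLocalRing R] [Finite (ResidueField R)] (h2 : IsUnit (2 : R))
    {K : Type*} [Field K] [Algebra R K] [IsFractionRing R K]
    {d e : K} (hd : ¬ IsSquare d) (he : ¬ IsSquare e) (hde : ¬ IsSquare (d * e))
    {L : Type*} [Field L] [Algebra K L] (hL2 : finrank K L = 2)
    (hLd : ∃ s : L, s ^ 2 = algebraMap K L d) :
    -e ∉ normGroup K L ∨
      ∃ x : K, x ≠ 0 ∧ x ∉ normGroup K L ∧ x ^ 2 - e ∉ normGroup K L := by
  obtain ⟨s, hs⟩ := hLd
  obtain ⟨φ⟩ := nonempty_algEquiv_quadraticAlgebra hL2 hd hs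
  lift d to Kˣ using isUnit_iff_ne_zero.2 fun h ↦ hd (h ▸ .zero)
  lift e to Kˣ using isUnit_iff_ne_zero.2 fun h ↦ he (h ▸ .zero)
  rw [isSquare_val_iff] at hd he
  rw [← Units.val_mul, isSquare_val_iff] at hde
  rw [← Units.val_neg, mem_normGroup_iff φ, or_iff_not_imp_left, not_not]
  intro hne
  have := isKleinFour_squareClass_units K h2
  have hN := quadraticNorms_ne_top h2 hd
  have hsum : ∃ y z : K, y ^ 2 + z ^ 2 = -1 := by
    obtain ⟨y, z, hyz⟩ := exists_sq_add_sq_eq_neg_one h2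
    exact ⟨algebraMap R K y, algebraMap R K z, by simp [← map_pow, ← map_add, hyz]⟩
  have hneg := neg_one_notMem_quadraticNorms hd he hde hN hne
  obtain ⟨r, hr⟩ := isSquare_neg_of_neg_mem_quadraticNorms hde hN hneg hsum hne
  obtain ⟨x, w, hx, hw, hwx⟩ :=
    exists_notMem_sq_add_sq_notMem (square_le_quadraticNorms _) hneg hsum r
  have hr' : -(e : K) = r ^ 2 := by rw [← Units.val_neg, hr, Units.val_mul, sq]
  refine ⟨x, x.ne_zero, (mem_normGroup_iff φ).not.2 hx, ?_⟩
  rwa [sub_eq_add_neg, hr', ← hwx, mem_normGroup_iff φ]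

/-- Theorem 1.2 (number-theoretic content): `p` an odd prime, `K` a `p`-adic field,
`d, e ∈ K*` non-squares with `de ∉ (K*)²` (so `L = K(√d)` and `E = K(√e)` are
non-isomorphic quadratic extensions). Then either `-e ∉ N_{L/K}(L*)`, or there exists
`x ∈ K*` with `x ∉ N_{L/K}(L*)` and `x² - e ∉ N_{L/K}(L*)`. -/
theorem stmt_9 (p : ℕ) [Fact p.Prime] (hp : p ≠ 2)
    (K : Type*) [Field K] [Algebra ℚ_[p] K] [FiniteDimensional ℚ_[p] K]
    (d e : K) (hd0 : d ≠ 0) (he0 : e ≠ 0)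
    (hd : ¬ IsSquare d) (he : ¬ IsSquare e) (hde : ¬ IsSquare (d * e))
    (L : Type*) [Field L] [Algebra K L] (hL2 : finrank K L = 2)
    (hLd : ∃ s : L, s ^ 2 = algebraMap K L d) :
    -e ∉ normGroup K L ∨
      ∃ x : K, x ≠ 0 ∧ x ∉ normGroup K L ∧ x ^ 2 - e ∉ normGroup K L := by
  obtain ⟨_, _, _, isUnit_natCast_iff⟩ := exists_isNonarchimedeanLocalField p K
  have h2 : IsUnit (2 : 𝒪[K]) :=
    mod_cast (isUnit_natCast_iff 2).2 ((Nat.coprime_primes Fact.out Nat.prime_two).2 hp)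
  exact stmt_9_general h2 hd he hde hL2 hLd
end

section
/- Let d, e ∈ ℚ₂* with v₂(d) = 1 and v₂(e) = 3, and suppose de ∉ (ℚ₂*)² (so ℚ₂(√d) and ℚ₂(√e) are non-isomorphic quadratic extensions of ℚ₂). Let L = ℚ₂(√d). Then at least one of the three elements −1, 1 − e/4, e does not belong to N_{L/ℚ₂}(L*). -/
open Module

/-!
Write `d = 2u` and `e = 8w` with `2`-adic units `u` and `w`. Since `2` divides `d` exactly once, a
unit of the form `x ^ 2 - d * y ^ 2` has `x` and `y` integral with `x` odd, so it is `1` or `1 - 2u`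
modulo `8`. If `-1`, `1 - e / 4 = 1 - 2w` and `e` are all norms, then so is
`u * w = (-1) * (-d) * e / 4 ^ 2`, and these three units satisfy

* `-1 ≡ 1 - 2u`, so `u ≡ 1` modulo `4`;
* `1 - 2w ≡ 1 - 2u`, as `1 - 2w ≢ 1`, so `w ≡ u ≡ 1` modulo `4`;
* `u * w ≡ 1` or `u * w ≡ 1 - 2u ≡ -1` modulo `8`, and only the former is `1` modulo `4`.

By Hensel's lemma `u * w` is a square, hence so is `d * e = 4 ^ 2 * (u * w)`.
-/

section QuadraticExtension

variable {K L : Type*} [Field K] [Field L] [Algebra K L]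

lemma mul_mem_normGroup {a b : K} (ha : a ∈ normGroup K L) (hb : b ∈ normGroup K L) :
    a * b ∈ normGroup K L := by
  obtain ⟨s, hs, rfl⟩ := ha
  obtain ⟨t, ht, rfl⟩ := hb
  exact ⟨s * t, mul_ne_zero hs ht, map_mul _ s t⟩

/-- The identification of `K[X] / (X ^ 2 - d)`, encoded as `QuadraticAlgebra K d 0`, with a
quadratic extension of `K` containing a square root `s` of the non-square `d`. -/
noncomputable def quadraticAlgebraEquivOfSqEq (hL : finrank K L = 2) {d : K} (hd : ¬ IsSquare d)
    {s : L} (hs : s ^ 2 = algebraMap K L d) : QuadraticAlgebra K d 0 ≃ₐ[K] L :=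
  haveI : Fact (∀ r : K, r ^ 2 ≠ d + 0 * r) :=
    ⟨fun r hr ↦ hd ⟨r, by rw [← sq, hr, zero_mul, add_zero]⟩⟩
  let f : QuadraticAlgebra K d 0 →ₐ[K] L :=
    QuadraticAlgebra.lift ⟨s, by rw [← sq, hs, zero_smul, add_zero, Algebra.algebraMap_eq_smul_one]⟩
  haveI : FiniteDimensional K L := .of_finrank_eq_succ hL
  .ofBijective f ⟨f.toRingHom.injective,
    (LinearMap.injective_iff_surjective_of_finrank_eq_finrank (f := f.toLinearMap)
      (by rw [QuadraticAlgebra.finrank_eq_two, hL])).mp f.toRingHom.injective⟩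

lemma mem_normGroup_iff_exists_sq_sub_mul_sq (hL : finrank K L = 2) {d : K} (hd : ¬ IsSquare d)
    {s : L} (hs : s ^ 2 = algebraMap K L d) {a : K} :
    a ∈ normGroup K L ↔ a ≠ 0 ∧ ∃ x y : K, a = x ^ 2 - d * y ^ 2 := by
  have : FiniteDimensional K L := .of_finrank_eq_succ hL
  let φ := quadraticAlgebraEquivOfSqEq hL hd hs
  have norm_eq (z : QuadraticAlgebra K d 0) : Algebra.norm K (φ z) = z.re ^ 2 - d * z.im ^ 2 := by
    have hz : Algebra.norm K z = z.norm := QuadraticAlgebra.det_toLinearMap_eq_norm z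
    rw [Algebra.norm_eq_of_algEquiv, hz, QuadraticAlgebra.norm_def]
    ring
  constructor
  · rintro ⟨t, ht, rfl⟩
    refine ⟨Algebra.norm_ne_zero_iff.mpr ht, (φ.symm t).re, (φ.symm t).im, ?_⟩
    rw [← norm_eq, φ.apply_symm_apply]
  · rintro ⟨ha, x, y, rfl⟩
    exact ⟨φ ⟨x, y⟩, Algebra.norm_ne_zero_iff.mp (norm_eq ⟨x, y⟩ ▸ ha), norm_eq ⟨x, y⟩⟩

end QuadraticExtension

section OddValuation

variable {p : ℕ} [Fact p.Prime]

lemma padic_valuation_eq_of_norm_eq {x y : ℚ_[p]} (h : ‖x‖ = ‖y‖) :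
    x.valuation = y.valuation := by
  rcases eq_or_ne x 0 with rfl | hx
  · rw [norm_eq_zero.mp (h.symm.trans norm_zero)]
  have hy : y ≠ 0 := by rwa [← norm_ne_zero_iff, ← h, norm_ne_zero_iff]
  have hp : 1 < (p : ℝ) := mod_cast (Fact.out : p.Prime).one_lt
  rw [Padic.norm_eq_zpow_neg_valuation hx, Padic.norm_eq_zpow_neg_valuation hy] at h
  exact neg_injective (zpow_right_injective₀ (zero_lt_one.trans hp) hp.ne' h)

lemma padic_valuation_units_coe (u : ℤ_[p]ˣ) : ((u : ℤ_[p]) : ℚ_[p]).valuation = 0 := by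
  rw [← Padic.valuation_one (p := p)]
  refine padic_valuation_eq_of_norm_eq ?_
  rw [norm_one]
  exact PadicInt.norm_units u

lemma exists_padicInt_unit_mul_zpow_valuation {a : ℚ_[p]} (ha : a ≠ 0) :
    ∃ u : ℤ_[p]ˣ, a = ((u : ℤ_[p]) : ℚ_[p]) * p ^ a.valuation := by
  have hp : (p : ℚ_[p]) ≠ 0 := mod_cast (Fact.out : p.Prime).ne_zero
  have hpa : (p : ℚ_[p]) ^ a.valuation ≠ 0 := zpow_ne_zero _ hp
  have hnorm : ‖a / p ^ a.valuation‖ = 1 := by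
    rw [norm_div, Padic.norm_p_zpow, Padic.norm_eq_zpow_neg_valuation ha, div_self]
    exact zpow_ne_zero _ (mod_cast (Fact.out : p.Prime).ne_zero)
  exact ⟨PadicInt.mkUnits hnorm, by rw [PadicInt.mkUnits_eq, div_mul_cancel₀ a hpa]⟩

variable {d : ℚ_[p]}

lemma norm_ne_norm_sq_of_odd_valuation (hd : Odd d.valuation) (z : ℚ_[p]) : ‖d‖ ≠ ‖z ^ 2‖ := by
  intro h
  rw [padic_valuation_eq_of_norm_eq h, Padic.valuation_pow] at hd
  exact Int.not_even_iff_odd.mpr hd (even_two.mul_right _)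

lemma not_isSquare_of_odd_valuation (hd : Odd d.valuation) : ¬ IsSquare d := by
  rintro ⟨z, hz⟩
  exact norm_ne_norm_sq_of_odd_valuation hd z (by rw [hz, sq])

lemma norm_sq_sub_mul_sq_of_odd_valuation (hd : Odd d.valuation) (x y : ℚ_[p]) :
    ‖x ^ 2 - d * y ^ 2‖ = max ‖x ^ 2‖ ‖d * y ^ 2‖ := by
  rcases eq_or_ne y 0 with rfl | hy
  · simp
  have hne : ‖x ^ 2‖ ≠ ‖-(d * y ^ 2)‖ := by
    intro h
    refine norm_ne_norm_sq_of_odd_valuation hd (x / y) ?_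
    rw [div_pow, norm_div, h, norm_neg, norm_mul,
      mul_div_cancel_right₀ _ (norm_ne_zero_iff.mpr (pow_ne_zero 2 hy))]
  rw [sub_eq_add_neg, Padic.add_eq_max_of_ne hne, norm_neg]

lemma norm_le_one_of_norm_sq_sub_mul_sq_le_one (hd : d.valuation = 1) {x y : ℚ_[p]}
    (h : ‖x ^ 2 - d * y ^ 2‖ ≤ 1) : ‖x‖ ≤ 1 ∧ ‖y‖ ≤ 1 := by
  rw [norm_sq_sub_mul_sq_of_odd_valuation (hd ▸ odd_one), max_le_iff, norm_pow,
    pow_le_one_iff_of_nonneg (norm_nonneg x) two_ne_zero] at h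
  refine ⟨h.1, ?_⟩
  rcases eq_or_ne y 0 with rfl | hy
  · simp
  have hd0 : d ≠ 0 := by
    rintro rfl
    simp at hd
  have hdy := h.2
  rw [Padic.norm_le_one_iff_val_nonneg, Padic.valuation_mul hd0 (pow_ne_zero 2 hy), hd,
    Padic.valuation_pow] at hdy
  rw [Padic.norm_le_one_iff_val_nonneg]
  lia

end OddValuation

section Squares

open IsLocalRing Polynomial

-- Completing the square turns `z ^ 2 = 1 + 4 * m` into `X ^ 2 + X = m`, which has the simple root
-- `0` modulo `I` even when `2 ∈ I`.
lemma isSquare_one_add_four_mul {R : Type*} [CommRing R] {I : Ideal R} [HenselianRing R I] {m : R}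
    (hm : m ∈ I) : IsSquare (1 + 4 * m) := by
  obtain ⟨z, hz, -⟩ := HenselianRing.is_henselian (I := I) (X ^ 2 + X - C m : R[X])
    (by monicity!) 0 (by simpa using hm) (by simp)
  have hz : z ^ 2 + z - m = 0 := by simpa using hz
  exact ⟨1 + 2 * z, by linear_combination -4 * hz⟩

lemma two_mul_mem_maximalIdeal (k : ℤ_[2]) : 2 * k ∈ maximalIdeal ℤ_[2] :=
  Ideal.mul_mem_right k _ (by simpa using PadicInt.p_nonunit (p := 2))

lemma isSquare_of_toZModPow_three_eq_one {c : ℤ_[2]} (hc : PadicInt.toZModPow 3 c = 1) :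
    IsSquare c := by
  have hmem : c - 1 ∈ Ideal.span {((2 : ℕ) : ℤ_[2]) ^ 3} := by
    rw [← PadicInt.ker_toZModPow, RingHom.mem_ker, map_sub, hc, map_one, sub_self]
  obtain ⟨k, hk⟩ := Ideal.mem_span_singleton.mp hmem
  have hck : c = 1 + 4 * (2 * k) := by
    push_cast at hk
    linear_combination hk
  exact hck ▸ isSquare_one_add_four_mul (two_mul_mem_maximalIdeal k)

end Squares

lemma zmod_eight_eq_one_or_of_isUnit_sq_sub {u x y : ZMod 8}
    (h : IsUnit (x ^ 2 - 2 * u * y ^ 2)) :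
    x ^ 2 - 2 * u * y ^ 2 = 1 ∨ x ^ 2 - 2 * u * y ^ 2 = 1 - 2 * u := by
  have hx : x ^ 2 = 1 := by
    have sq_eq_one : ∀ x k : ZMod 8, IsUnit (x ^ 2 - 2 * k) → x ^ 2 = 1 := by decide
    exact sq_eq_one x (u * y ^ 2) (by rwa [← mul_assoc])
  have hy : 2 * y ^ 2 = 0 ∨ 2 * y ^ 2 = 2 := by
    have two_mul_sq : ∀ y : ZMod 8, 2 * y ^ 2 = 0 ∨ 2 * y ^ 2 = 2 := by decide
    exact two_mul_sq y
  rw [hx]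
  rcases hy with hy | hy
  · exact .inl (by linear_combination -u * hy)
  · exact .inr (by linear_combination -u * hy)

lemma toZModPow_three_eq_one_or_of_eq_sq_sub {u : ℤ_[2]ˣ} {a : ℤ_[2]} (ha : IsUnit a)
    (h : ∃ x y : ℚ_[2], (a : ℚ_[2]) = x ^ 2 - 2 * (u : ℤ_[2]) * y ^ 2) :
    PadicInt.toZModPow 3 a = 1 ∨
      PadicInt.toZModPow 3 a = 1 - 2 * PadicInt.toZModPow 3 (u : ℤ_[2]) := by
  obtain ⟨x, y, hxy⟩ := h
  have hu : (2 * (u : ℤ_[2]) : ℚ_[2]).valuation = 1 := by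
    rw [Padic.valuation_mul two_ne_zero (by simp), padic_valuation_units_coe, add_zero]
    exact Padic.valuation_p (p := 2)
  have hnorm : ‖x ^ 2 - 2 * (u : ℤ_[2]) * y ^ 2‖ ≤ 1 := hxy ▸ a.2
  obtain ⟨hx, hy⟩ := norm_le_one_of_norm_sq_sub_mul_sq_le_one hu hnorm
  obtain ⟨x, rfl⟩ : ∃ x₀ : ℤ_[2], (x₀ : ℚ_[2]) = x := ⟨⟨x, hx⟩, rfl⟩
  obtain ⟨y, rfl⟩ : ∃ y₀ : ℤ_[2], (y₀ : ℚ_[2]) = y := ⟨⟨y, hy⟩, rfl⟩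
  have hxy : a = x ^ 2 - 2 * u * y ^ 2 := Subtype.ext hxy
  have hred := congrArg (PadicInt.toZModPow 3) hxy
  simp only [map_sub, map_mul, map_pow, map_ofNat] at hred
  rw [hred]
  exact zmod_eight_eq_one_or_of_isUnit_sq_sub (hred ▸ ha.map _)

lemma zmod_eight_mul_eq_one {u w : ZMod 8} (hw : IsUnit w) (hneg : -1 = 1 - 2 * u)
    (hsub : 1 - 2 * w = 1 ∨ 1 - 2 * w = 1 - 2 * u) (hmul : u * w = 1 ∨ u * w = 1 - 2 * u) :
    u * w = 1 := by
  have two_mul_ne_zero : ∀ w : ZMod 8, IsUnit w → 2 * w ≠ 0 := by decide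
  have hu2 : 2 * u = 2 := by linear_combination hneg
  have hw2 : 2 * w = 2 := by
    have h := hsub.resolve_left fun h ↦ two_mul_ne_zero w hw (by linear_combination -h)
    linear_combination hu2 - h
  refine hmul.resolve_right fun h ↦ absurd (?_ : (2 : ZMod 8) = -2) (by decide)
  linear_combination 2 * h - u * hw2 - 3 * hu2

lemma isSquare_mul_of_eq_sq_sub {u w : ℤ_[2]ˣ}
    (hneg : ∃ x y : ℚ_[2], -1 = x ^ 2 - 2 * (u : ℤ_[2]) * y ^ 2)
    (hsub : ∃ x y : ℚ_[2], 1 - 2 * ((w : ℤ_[2]) : ℚ_[2]) = x ^ 2 - 2 * (u : ℤ_[2]) * y ^ 2)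
    (hmul : ∃ x y : ℚ_[2], ((u : ℤ_[2]) : ℚ_[2]) * (w : ℤ_[2]) = x ^ 2 - 2 * (u : ℤ_[2]) * y ^ 2) :
    IsSquare (u * w : ℤ_[2]) := by
  have hunit : IsUnit (1 - 2 * w : ℤ_[2]) :=
    IsLocalRing.isUnit_one_sub_self_of_mem_nonunits _ (two_mul_mem_maximalIdeal _)
  have hneg := toZModPow_three_eq_one_or_of_eq_sq_sub (u := u) (a := -1) isUnit_one.neg
    (by exact_mod_cast hneg)
  have hsub := toZModPow_three_eq_one_or_of_eq_sq_sub (u := u) hunit hsub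
  have hmul := toZModPow_three_eq_one_or_of_eq_sq_sub (u := u) (u * w).isUnit hmul
  refine isSquare_of_toZModPow_three_eq_one ?_
  simp only [map_neg, map_sub, map_mul, map_one, map_ofNat, Units.val_mul] at hneg hsub hmul ⊢
  exact zmod_eight_mul_eq_one (w.isUnit.map _) (hneg.resolve_left (by decide)) hsub hmul

/-- Lemma 4.2(ii): let `d, e ∈ ℚ₂*` with `v₂(d) = 1`, `v₂(e) = 3` and `de ∉ (ℚ₂*)²`,
and let `L = ℚ₂(√d)`. Then at least one of `-1`, `1 - e/4`, `e` is not a norm from `L`. -/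
theorem stmt_11 (d e : ℚ_[2]) (hd0 : d ≠ 0) (he0 : e ≠ 0)
    (hvd : d.valuation = 1) (hve : e.valuation = 3)
    (hde : ¬ IsSquare (d * e))
    (L : Type*) [Field L] [Algebra ℚ_[2] L] (hL2 : finrank ℚ_[2] L = 2)
    (hLd : ∃ s : L, s ^ 2 = algebraMap ℚ_[2] L d) :
    (-1 : ℚ_[2]) ∉ normGroup ℚ_[2] L ∨ (1 - e / 4) ∉ normGroup ℚ_[2] L ∨
      e ∉ normGroup ℚ_[2] L := by
  by_contra! hnorms
  obtain ⟨hneg, hsub, he⟩ := hnorms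
  obtain ⟨s, hs⟩ := hLd
  have mem_iff {a : ℚ_[2]} := mem_normGroup_iff_exists_sq_sub_mul_sq (a := a) hL2
    (not_isSquare_of_odd_valuation (hvd ▸ odd_one)) hs
  obtain ⟨u, rfl⟩ : ∃ u : ℤ_[2]ˣ, d = 2 * (u : ℤ_[2]) := by
    simpa [hvd, mul_comm] using exists_padicInt_unit_mul_zpow_valuation hd0
  obtain ⟨w, rfl⟩ : ∃ w : ℤ_[2]ˣ, e = 2 ^ 3 * (w : ℤ_[2]) := by
    simpa [hve, mul_comm] using exists_padicInt_unit_mul_zpow_valuation he0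
  have huw : ((u : ℤ_[2]) : ℚ_[2]) * (w : ℤ_[2]) ∈ normGroup ℚ_[2] L := by
    have hd : -(2 * (u : ℤ_[2]) : ℚ_[2]) ∈ normGroup ℚ_[2] L :=
      mem_iff.mpr ⟨neg_ne_zero.mpr hd0, 0, 1, by ring⟩
    have hsq : (1 / 4 : ℚ_[2]) ^ 2 ∈ normGroup ℚ_[2] L :=
      mem_iff.mpr ⟨by norm_num, 1 / 4, 0, by ring⟩
    convert mul_mem_normGroup (mul_mem_normGroup (mul_mem_normGroup hneg hd) he) hsq using 1
    ring
  have hsub' : 1 - 2 * ((w : ℤ_[2]) : ℚ_[2]) ∈ normGroup ℚ_[2] L := by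
    convert hsub using 1
    ring
  obtain ⟨r, hr⟩ :=
    isSquare_mul_of_eq_sq_sub (mem_iff.mp hneg).2 (mem_iff.mp hsub').2 (mem_iff.mp huw).2
  have hr' : ((u : ℤ_[2]) : ℚ_[2]) * (w : ℤ_[2]) = r * r := mod_cast congrArg _ hr
  exact hde ⟨4 * r, by linear_combination 16 * hr'⟩
end

section
/- Let K be a finite extension of ℚ₂ whose residue field has 2 elements, and let L/K be a ramified quadratic extension with s = s(L/K). If γ ∈ U_{s,K} but γ ∉ U_{s+1,K}, then γ ∉ N_{L/K}(L*). -/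
open Module

/-- `v` is the normalized discrete valuation of the `p`-adic field `K`. -/
def IsNormalizedValuation (p : ℕ) [Fact p.Prime] {K : Type*} [Field K] [Algebra ℚ_[p] K]
    (v : K → ℤ) : Prop :=
  (∀ x y : K, x ≠ 0 → y ≠ 0 → v (x * y) = v x + v y) ∧
  (∀ x y : K, x ≠ 0 → y ≠ 0 → x + y ≠ 0 → min (v x) (v y) ≤ v (x + y)) ∧
  (∀ n : ℤ, ∃ x : K, x ≠ 0 ∧ v x = n) ∧
  0 < v (algebraMap ℚ_[p] K (p : ℚ_[p]))

/-- The higher unit group `U_{i,F} = {u ∈ F* : v_F(u - 1) ≥ i}` (with `u = 1` allowed). -/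
def higherUnits {F : Type*} [Field F] (v : F → ℤ) (i : ℤ) : Set F :=
  {u : F | u ≠ 0 ∧ (u - 1 = 0 ∨ i ≤ v (u - 1))}

/-! A norm differs from `1` by `N(1 + x) - 1 = Tr x + N x`. Since `L/K` is ramified, `v_L a` is
even and `v_L (b * π)` is odd for nonzero `a b : K`, so `v_L (a + b * π)` is their minimum.
Applied to `σ π - π = Tr π - 2 * π` this gives `s + 1 = min (v_L (Tr π)) (v_L 2 + 1)`, and applied
to `x = a + b * π`, whose trace is `2 * a + b * Tr π`, it yields `2 * v_K (Tr x) ≥ v_L x + s`,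
together with `v_K (Tr x) = s` when `v_L x = s`. As `v_K (N x) = v_L x`, the element `Tr x + N x`
has valuation `v_L x` if `v_L x < s` and valuation greater than `s` if `v_L x > s`. If
`v_L x = s`, both summands have valuation `s`, and over the residue field `𝔽₂` their sum has
larger valuation. -/

namespace IsNormalizedValuation

variable {p : ℕ} [Fact p.Prime] {K : Type*} [Field K] [Algebra ℚ_[p] K] {v : K → ℤ}

theorem map_one (hv : IsNormalizedValuation p v) : v 1 = 0 := by
  simpa using hv.1 1 1 one_ne_zero one_ne_zero

open Classical in
/-- The additive valuation with value `⊤` at `0` that agrees with `v` on nonzero elements. -/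
noncomputable def addValuation (hv : IsNormalizedValuation p v) : AddValuation K (WithTop ℤ) :=
  AddValuation.of (fun x ↦ if x = 0 then ⊤ else (v x : WithTop ℤ)) (if_pos rfl)
    (by simp [hv.map_one])
    (fun x y ↦ by
      by_cases hx : x = 0
      · simp [hx]
      by_cases hy : y = 0
      · simp [hy]
      by_cases hxy : x + y = 0
      · simp [hxy]
      simp only [hx, hy, hxy, if_false]
      exact_mod_cast hv.2.1 x y hx hy hxy)
    (fun x y ↦ by
      by_cases hx : x = 0
      · simp [hx]
      by_cases hy : y = 0
      · simp [hy]
      simp [hx, hy, hv.1 x y hx hy])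

theorem addValuation_of_ne_zero (hv : IsNormalizedValuation p v) {x : K} (hx : x ≠ 0) :
    hv.addValuation x = v x :=
  if_neg hx

theorem coe_le_addValuation_iff (hv : IsNormalizedValuation p v) {x : K} {n : ℤ} :
    (n : WithTop ℤ) ≤ hv.addValuation x ↔ x = 0 ∨ n ≤ v x := by
  by_cases hx : x = 0
  · simp [hx]
  · simp [hx, hv.addValuation_of_ne_zero hx]

theorem addValuation_eq_coe_iff (hv : IsNormalizedValuation p v) {x : K} {n : ℤ} :
    hv.addValuation x = n ↔ x ≠ 0 ∧ v x = n := by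
  by_cases hx : x = 0
  · simp [hx]
  · simp [hx, hv.addValuation_of_ne_zero hx]

theorem addValuation_sub_one_eq_of_mem_higherUnits (hv : IsNormalizedValuation p v) {u : K}
    {i : ℤ} (hu : u ∈ higherUnits v i) (hu' : u ∉ higherUnits v (i + 1)) :
    hv.addValuation (u - 1) = i := by
  obtain ⟨hu0, hi⟩ := hu
  have hi' : ¬(u - 1 = 0 ∨ i + 1 ≤ v (u - 1)) := fun h ↦ hu' ⟨hu0, h⟩
  rw [addValuation_eq_coe_iff]
  grind

theorem addValuation_sub_one_pos (hv : IsNormalizedValuation p v)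
    (hres : ∀ u : K, u ≠ 0 → v u = 0 → (u - 1 = 0 ∨ 1 ≤ v (u - 1))) (u : K)
    (hu : hv.addValuation u = 0) : 0 < hv.addValuation (u - 1) := by
  obtain ⟨hu0, hvu⟩ := hv.addValuation_eq_coe_iff.1 hu
  exact zero_lt_one.trans_le (hv.coe_le_addValuation_iff.2 (hres u hu0 hvu))

theorem addValuation_algebraMap {L : Type*} [Field L] [Algebra ℚ_[p] L] [Algebra K L]
    {w : L → ℤ} (hv : IsNormalizedValuation p v) (hw : IsNormalizedValuation p w)
    {e : ℕ} (he : e ≠ 0) (hram : ∀ x : K, x ≠ 0 → w (algebraMap K L x) = e * v x) (x : K) :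
    hw.addValuation (algebraMap K L x) = e • hv.addValuation x := by
  by_cases hx : x = 0
  · obtain ⟨n, rfl⟩ := Nat.exists_eq_succ_of_ne_zero he
    simp [hx, succ_nsmul]
  · have hx' : algebraMap K L x ≠ 0 := by simpa using hx
    rw [hv.addValuation_of_ne_zero hx, hw.addValuation_of_ne_zero hx', hram x hx]
    norm_cast

end IsNormalizedValuation

section WithTop

variable {α : Type*} [AddCommMonoid α] [LinearOrder α] [IsOrderedCancelAddMonoid α]

theorem strictMono_two_nsmul : StrictMono fun x : WithTop α ↦ 2 • x := fun x y h ↦ by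
  simpa only [two_nsmul] using WithTop.add_lt_add h h

theorem lt_of_lt_of_add_le_two_nsmul {x y z : WithTop α} (hxy : x < y) (h : x + y ≤ 2 • z) :
    x < z := by
  refine strictMono_two_nsmul.lt_iff_lt.1 (lt_of_lt_of_le ?_ h)
  rw [two_nsmul]
  exact WithTop.add_lt_add_left hxy.ne_top hxy

theorem eq_top_of_two_nsmul_eq_two_nsmul_add_one {x y : WithTop ℤ}
    (h : 2 • x = 2 • y + 1) : x = ⊤ := by
  by_contra hx
  lift x to ℤ using hx
  cases y with
  | top => simp [two_nsmul] at h
  | coe y =>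
    rw [two_nsmul, two_nsmul] at h
    norm_cast at h
    omega

end WithTop

namespace QuadraticExtension

variable {K L : Type*} [Field K] [Field L] [Algebra K L] [Algebra.IsQuadraticExtension K L]
  {σ : Gal(L/K)}

theorem isGalois_of_ne_one (hσ : σ ≠ 1) : IsGalois K L := by
  have : Nontrivial Gal(L/K) := ⟨σ, 1, hσ⟩
  have hle : Nat.card Gal(L/K) ≤ finrank K L := Nat.card_eq_fintype_card.trans_le AlgEquiv.card_le
  have hlt : 1 < Nat.card Gal(L/K) := Finite.one_lt_card
  have hfin := Algebra.IsQuadraticExtension.finrank_eq_two K L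
  exact IsGalois.of_card_aut_eq_finrank K L (by omega)

theorem univ_eq_pair [DecidableEq Gal(L/K)] (hσ : σ ≠ 1) :
    (Finset.univ : Finset Gal(L/K)) = {1, σ} := by
  have := isGalois_of_ne_one hσ
  refine (Finset.eq_univ_of_card _ ?_).symm
  rw [Finset.card_pair hσ.symm, ← Nat.card_eq_fintype_card, IsGalois.card_aut_eq_finrank,
    Algebra.IsQuadraticExtension.finrank_eq_two]

theorem algebraMap_norm_eq_mul (hσ : σ ≠ 1) (x : L) :
    algebraMap K L (Algebra.norm K x) = x * σ x := by
  classical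
  have := isGalois_of_ne_one hσ
  rw [Algebra.norm_eq_prod_automorphisms, univ_eq_pair hσ, Finset.prod_pair hσ.symm,
    AlgEquiv.one_apply]

theorem algebraMap_trace_eq_add (hσ : σ ≠ 1) (x : L) :
    algebraMap K L (Algebra.trace K L x) = x + σ x := by
  classical
  have := isGalois_of_ne_one hσ
  rw [trace_eq_sum_automorphisms, univ_eq_pair hσ, Finset.sum_pair hσ.symm,
    AlgEquiv.one_apply]

theorem norm_one_add (hσ : σ ≠ 1) (x : L) :
    Algebra.norm K (1 + x) = 1 + (Algebra.trace K L x + Algebra.norm K x) := by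
  apply (algebraMap K L).injective
  simp only [map_add, map_one, algebraMap_norm_eq_mul hσ, algebraMap_trace_eq_add hσ]
  ring

theorem trace_algebraMap_add_mul (a b : K) (x : L) :
    Algebra.trace K L (algebraMap K L a + algebraMap K L b * x) =
      2 * a + b * Algebra.trace K L x := by
  rw [map_add, Algebra.trace_algebraMap, ← Algebra.smul_def, map_smul, smul_eq_mul,
    Algebra.IsQuadraticExtension.finrank_eq_two, nsmul_eq_mul, Nat.cast_ofNat]

theorem exists_eq_algebraMap_add_mul {y : L} (hy : y ∉ Set.range (algebraMap K L)) (x : L) :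
    ∃ a b : K, x = algebraMap K L a + algebraMap K L b * y := by
  have hli : LinearIndependent K ![1, y] := by
    refine (LinearIndependent.pair_iff' one_ne_zero).2 fun a ha ↦ hy ⟨a, ?_⟩
    rw [← ha, Algebra.algebraMap_eq_smul_one]
  have hx : x ∈ Submodule.span K (Set.range ![1, y]) := by
    rw [hli.span_eq_top_of_card_eq_finrank'
      (by simp [Algebra.IsQuadraticExtension.finrank_eq_two K L])]
    exact Submodule.mem_top
  rw [Matrix.range_cons, Matrix.range_cons, Matrix.range_empty, Set.union_empty,
    Set.singleton_union, Submodule.mem_span_pair] at hx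
  obtain ⟨a, b, rfl⟩ := hx
  exact ⟨a, b, by simp [Algebra.smul_def]⟩

end QuadraticExtension

theorem lt_map_add_of_residueField_two {K Γ₀ : Type*} [Field K]
    [LinearOrderedAddCommGroupWithTop Γ₀] {v : AddValuation K Γ₀}
    (hres : ∀ u : K, v u = 0 → 0 < v (u - 1)) {x y : K} (hy : y ≠ 0) (hxy : v x = v y) :
    v y < v (x + y) := by
  have hvy : v y ≠ ⊤ := (AddValuation.ne_top_iff v).2 hy
  have hunit : v (-(x / y)) = 0 := by
    rw [AddValuation.map_neg, AddValuation.map_div, hxy,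
      LinearOrderedAddCommGroupWithTop.sub_self_eq_zero_iff_ne_top]
    exact hvy
  calc v y = v y + 0 := (add_zero _).symm
    _ < v y + v (-(x / y) - 1) :=
      (add_lt_add_iff_right_of_ne_top hvy).2 (hres _ hunit)
    _ = v (x + y) := by
      rw [← AddValuation.map_mul, ← AddValuation.map_neg]
      congr 1
      field_simp
      ring

open QuadraticExtension

namespace RamifiedQuadratic

variable {K L : Type*} [Field K] [Field L] [Algebra K L]
  {vK : AddValuation K (WithTop ℤ)} {vL : AddValuation L (WithTop ℤ)}
  (hram : ∀ x : K, vL (algebraMap K L x) = 2 • vK x) {π : L} (hπ : vL π = 1)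

include hram

theorem eq_zero_of_map_algebraMap_eq_add_one {a b : K}
    (h : vL (algebraMap K L a) = vL (algebraMap K L b) + 1) : a = 0 := by
  rw [hram, hram] at h
  exact (AddValuation.top_iff vK).1 (eq_top_of_two_nsmul_eq_two_nsmul_add_one h)

include hπ

theorem uniformizer_notMem_range_algebraMap : π ∉ Set.range (algebraMap K L) := by
  rintro ⟨a, rfl⟩
  have ha : a = 0 := eq_zero_of_map_algebraMap_eq_add_one hram (b := 1) (by simpa using hπ)
  simp [ha] at hπ

theorem map_add_mul_uniformizer (a b : K) :
    vL (algebraMap K L a + algebraMap K L b * π) =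
      min (vL (algebraMap K L a)) (vL (algebraMap K L b) + 1) := by
  by_cases ha : a = 0
  · simp [ha, hπ]
  · rw [← hπ, ← AddValuation.map_mul]
    refine AddValuation.map_add_of_distinct_val _ fun h ↦
      ha (eq_zero_of_map_algebraMap_eq_add_one hram (b := b) ?_)
    rw [h, AddValuation.map_mul, hπ]

variable {a b c d : K} {s : ℤ}

/-- The odd case: `s + 1` is the valuation of `c : K`, so `a` cannot have valuation `s`. -/
theorem map_mul_add_mul_of_map_eq_add_one (hab : vL (algebraMap K L a + algebraMap K L b * π) = s)
    (hc : vL (algebraMap K L c) = s + 1) (hd : s ≤ vL (algebraMap K L d)) :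
    vL (algebraMap K L (d * a + b * c)) = s + s := by
  rw [map_add_mul_uniformizer hram hπ] at hab
  have ha : s < vL (algebraMap K L a) := by
    refine (hab ▸ min_le_left _ _).lt_of_ne fun ha ↦ ?_
    have hc0 : c = 0 := eq_zero_of_map_algebraMap_eq_add_one hram (ha ▸ hc)
    simpa [hc0] using hc.symm
  have hb : vL (algebraMap K L b) + 1 = s := by grind
  have hbc : vL (algebraMap K L (b * c)) = s + s := by
    calc _ = vL (algebraMap K L b) + 1 + s := by
          rw [map_mul (algebraMap K L), AddValuation.map_mul, hc]
          abel
      _ = s + s := by rw [hb]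
  have hda : s + s < vL (algebraMap K L (d * a)) := by
    rw [map_mul (algebraMap K L), AddValuation.map_mul]
    exact WithTop.add_lt_add_of_le_of_lt WithTop.coe_ne_top hd ha
  rw [map_add (algebraMap K L), AddValuation.map_add_eq_of_lt_right _ (hbc ▸ hda), hbc]

/-- The even case: `s` is the valuation of `d : K`, so `b * π` cannot have valuation `s`. -/
theorem map_mul_add_mul_of_map_eq (hab : vL (algebraMap K L a + algebraMap K L b * π) = s)
    (hc : s + 1 ≤ vL (algebraMap K L c)) (hd : vL (algebraMap K L d) = s) :
    vL (algebraMap K L (d * a + b * c)) = s + s := by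
  rw [map_add_mul_uniformizer hram hπ] at hab
  have hb : s < vL (algebraMap K L b) + 1 := by
    refine (hab ▸ min_le_right _ _).lt_of_ne fun hb ↦ ?_
    have hd0 : d = 0 := eq_zero_of_map_algebraMap_eq_add_one hram (hd.trans hb)
    simp [hd0] at hd
  have ha : vL (algebraMap K L a) = s := by grind
  have hda : vL (algebraMap K L (d * a)) = s + s := by
    rw [map_mul (algebraMap K L), AddValuation.map_mul, hd, ha]
  have hbc : s + s < vL (algebraMap K L (b * c)) := by
    rw [map_mul (algebraMap K L), AddValuation.map_mul]
    calc (s + s : WithTop ℤ) < vL (algebraMap K L b) + 1 + s :=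
          WithTop.add_lt_add_right WithTop.coe_ne_top hb
      _ = vL (algebraMap K L b) + (s + 1) := by abel
      _ ≤ _ := by gcongr
  rw [map_add (algebraMap K L), AddValuation.map_add_eq_of_lt_left _ (hda ▸ hbc), hda]

variable [Algebra.IsQuadraticExtension K L] {σ : Gal(L/K)} (hσ : σ ≠ 1)

include hσ

theorem map_conj_uniformizer : vL (σ π) = 1 := by
  have htrace : vL (σ π) = min (vL (algebraMap K L (Algebra.trace K L π))) 1 := by
    have h := map_add_mul_uniformizer hram hπ (Algebra.trace K L π) (-1)
    rw [algebraMap_trace_eq_add hσ] at h ⊢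
    simpa using h
  have hnorm : vL (algebraMap K L (Algebra.norm K π)) = vL (σ π) + 1 := by
    rw [algebraMap_norm_eq_mul hσ, AddValuation.map_mul, hπ, add_comm]
  have hπ0 : π ≠ 0 := (AddValuation.ne_top_iff vL).1 (by simp [hπ])
  rcases min_choice (vL (algebraMap K L (Algebra.trace K L π))) 1 with h | h
  · rw [htrace, h] at hnorm
    exact absurd (eq_zero_of_map_algebraMap_eq_add_one hram hnorm)
      (Algebra.norm_ne_zero_iff.2 hπ0)
  · rw [htrace, h]

theorem map_conj (x : L) : vL (σ x) = vL x := by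
  obtain ⟨a, b, rfl⟩ :=
    exists_eq_algebraMap_add_mul (uniformizer_notMem_range_algebraMap hram hπ) x
  rw [map_add_mul_uniformizer hram hπ, map_add, map_mul, σ.commutes, σ.commutes,
    map_add_mul_uniformizer hram (map_conj_uniformizer hram hπ hσ)]

theorem map_norm (x : L) : vK (Algebra.norm K x) = vL x := by
  apply strictMono_two_nsmul.injective
  rw [← hram, algebraMap_norm_eq_mul hσ, AddValuation.map_mul, map_conj hram hπ hσ, two_nsmul]

theorem map_conj_div_sub_one_add_one :
    vL (σ π / π - 1) + 1 =
      min (vL (algebraMap K L (Algebra.trace K L π))) (vL (algebraMap K L 2) + 1) := by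
  have hπ0 : π ≠ 0 := (AddValuation.ne_top_iff vL).1 (by simp [hπ])
  have hdiff : (σ π / π - 1) * π =
      algebraMap K L (Algebra.trace K L π) + algebraMap K L (-2) * π := by
    rw [algebraMap_trace_eq_add hσ, map_neg, map_ofNat]
    field_simp
    ring
  have h := map_add_mul_uniformizer hram hπ (Algebra.trace K L π) (-2)
  rwa [← hdiff, AddValuation.map_mul, hπ, map_neg, AddValuation.map_neg] at h

theorem map_conj_div_sub_one_le_map_two : vL (σ π / π - 1) ≤ vL (algebraMap K L 2) := by
  have h := (map_conj_div_sub_one_add_one hram hπ hσ).trans_le (min_le_right _ _)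
  exact (WithTop.add_le_add_iff_right WithTop.one_ne_top).1 h

theorem map_conj_div_sub_one_add_one_le_map_trace :
    vL (σ π / π - 1) + 1 ≤ vL (algebraMap K L (Algebra.trace K L π)) :=
  (map_conj_div_sub_one_add_one hram hπ hσ).trans_le (min_le_left _ _)

theorem map_add_map_conj_div_sub_one_le_map_trace (x : L) :
    vL x + vL (σ π / π - 1) ≤ 2 • vK (Algebra.trace K L x) := by
  obtain ⟨a, b, rfl⟩ :=
    exists_eq_algebraMap_add_mul (uniformizer_notMem_range_algebraMap hram hπ) x
  rw [← hram, trace_algebraMap_add_mul, map_add_mul_uniformizer hram hπ,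
    map_add (algebraMap K L), map_mul (algebraMap K L), map_mul (algebraMap K L)]
  apply AddValuation.map_le_add
  · rw [AddValuation.map_mul, add_comm]
    exact add_le_add (map_conj_div_sub_one_le_map_two hram hπ hσ) (min_le_left _ _)
  · rw [AddValuation.map_mul]
    calc _ ≤ vL (algebraMap K L b) + 1 + vL (σ π / π - 1) := by gcongr; exact min_le_right _ _
      _ = vL (algebraMap K L b) + (vL (σ π / π - 1) + 1) := by abel
      _ ≤ _ := by
        gcongr
        exact map_conj_div_sub_one_add_one_le_map_trace hram hπ hσ

theorem map_trace_eq_of_map_eq (hs : vL (σ π / π - 1) = s) {x : L} (hx : vL x = s) :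
    vK (Algebra.trace K L x) = s := by
  have htwo := map_conj_div_sub_one_le_map_two hram hπ hσ
  have htrace := map_conj_div_sub_one_add_one_le_map_trace hram hπ hσ
  have hbreak := map_conj_div_sub_one_add_one hram hπ hσ
  rw [hs] at htwo htrace hbreak
  obtain ⟨a, b, rfl⟩ :=
    exists_eq_algebraMap_add_mul (uniformizer_notMem_range_algebraMap hram hπ) x
  apply strictMono_two_nsmul.injective
  rw [← hram, two_nsmul, trace_algebraMap_add_mul]
  rcases min_choice (vL (algebraMap K L (Algebra.trace K L π))) (vL (algebraMap K L 2) + 1)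
    with hmin | hmin
  · exact map_mul_add_mul_of_map_eq_add_one hram hπ hx (hbreak.trans hmin).symm htwo
  · exact map_mul_add_mul_of_map_eq hram hπ hx htrace
      ((WithTop.add_right_inj WithTop.one_ne_top).1 (hbreak.trans hmin)).symm

end RamifiedQuadratic

open RamifiedQuadratic

theorem stmt_13_general {K L : Type*} [Field K] [Field L] [Algebra K L]
    [Algebra.IsQuadraticExtension K L]
    {vK : AddValuation K (WithTop ℤ)} (hres : ∀ u : K, vK u = 0 → 0 < vK (u - 1))
    {vL : AddValuation L (WithTop ℤ)} (hram : ∀ x : K, vL (algebraMap K L x) = 2 • vK x)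
    {σ : Gal(L/K)} (hσ : σ ≠ 1) {π : L} (hπ : vL π = 1) {s : ℤ} (hs : vL (σ π / π - 1) = s)
    {γ : K} (hγ : vK (γ - 1) = s) :
    γ ∉ normGroup K L := by
  rintro ⟨t, -, rfl⟩
  obtain ⟨x, rfl⟩ : ∃ x, t = 1 + x := ⟨t - 1, by ring⟩
  rw [norm_one_add hσ, add_sub_cancel_left] at hγ
  have hnorm := map_norm hram hπ hσ x
  have htrace := map_add_map_conj_div_sub_one_le_map_trace hram hπ hσ x
  rw [hs] at htrace
  rcases lt_trichotomy (vL x) s with hlt | heq | hgt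
  · have hlt' := lt_of_lt_of_add_le_two_nsmul hlt htrace
    rw [AddValuation.map_add_eq_of_lt_right _ (hnorm.trans_lt hlt'), hnorm] at hγ
    exact hlt.ne hγ
  · have htrace' := map_trace_eq_of_map_eq hram hπ hσ hs heq
    have hnorm' := hnorm.trans heq
    have hnorm0 : Algebra.norm K x ≠ 0 := (AddValuation.ne_top_iff vK).1 (by simp [hnorm'])
    have hlt := lt_map_add_of_residueField_two hres hnorm0 (htrace'.trans hnorm'.symm)
    exact hlt.ne (hnorm'.trans hγ.symm)
  · have hgt' := lt_of_lt_of_add_le_two_nsmul hgt (add_comm (vL x) s ▸ htrace)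
    exact (AddValuation.map_lt_add _ hgt' (hnorm.symm ▸ hgt)).ne' hγ

/-- Corollary 5.4(iii): let `K` be a finite extension of `ℚ₂` with residue field `𝔽₂`,
`L/K` a ramified quadratic extension with invariant `s = s(L/K)`. If `γ ∈ U_{s,K}` but
`γ ∉ U_{s+1,K}`, then `γ ∉ N_{L/K}(L*)`. -/
theorem stmt_13
    (K : Type*) [Field K] [Algebra ℚ_[2] K] [FiniteDimensional ℚ_[2] K]
    (vK : K → ℤ) (hvK : IsNormalizedValuation 2 vK)
    (hres : ∀ u : K, u ≠ 0 → vK u = 0 → (u - 1 = 0 ∨ 1 ≤ vK (u - 1)))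
    (L : Type*) [Field L] [Algebra K L] [Algebra ℚ_[2] L] [IsScalarTower ℚ_[2] K L]
    (hL2 : finrank K L = 2)
    (vL : L → ℤ) (hvL : IsNormalizedValuation 2 vL)
    (hram : ∀ x : K, x ≠ 0 → vL (algebraMap K L x) = 2 * vK x)
    (σ : L ≃ₐ[K] L) (hσ : σ ≠ 1)
    (πL : L) (hπL0 : πL ≠ 0) (hπL : vL πL = 1)
    (s : ℤ) (hs0 : σ πL / πL - 1 ≠ 0) (hs : vL (σ πL / πL - 1) = s)
    (γ : K) (hγ : γ ∈ higherUnits vK s) (hγ' : γ ∉ higherUnits vK (s + 1)) :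
    γ ∉ normGroup K L := by
  have : Algebra.IsQuadraticExtension K L := ⟨hL2⟩
  exact stmt_13_general
    (hvK.addValuation_sub_one_pos hres) (hvK.addValuation_algebraMap hvL two_ne_zero hram) hσ
    (hvL.addValuation_eq_coe_iff.2 ⟨hπL0, hπL⟩) (hvL.addValuation_eq_coe_iff.2 ⟨hs0, hs⟩)
    (hvK.addValuation_sub_one_eq_of_mem_higherUnits hγ hγ')
end

section
/- Let d, e ∈ ℚ₂* be non-squares with de ∉ (ℚ₂*)², let L = ℚ₂(√d), and suppose L/ℚ₂ is ramified. Then either −e ∉ N_{L/ℚ₂}(L*), or there exists x ∈ ℚ₂* with x ∉ N_{L/ℚ₂}(L*) and x² − e ∉ N_{L/ℚ₂}(L*). -/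
open Module

/-! Up to squares `d` and `e` are among `±1, ±2, ±5, ±10`, and `d` is not `1` or `5` because
`ℚ₂(√5)/ℚ₂` is unramified. For each remaining pair of distinct classes either `-e` is not a norm, or
there are a non-norm `y` and a norm `z` for which `y² - e` and `z² - e` are not norms; all this is
visible modulo `16`. Replacing `e` by `c² e` replaces `y` and `z` by `c y` and `c z`, the first of
which is a non-norm if `c` is a norm, and the second if `c` is not. -/

section NormGroup

variable {K L : Type*} [Field K] [Field L] [Algebra K L]

lemma ne_zero_of_mem_normGroup {a : K} (ha : a ∈ normGroup K L) : a ≠ 0 := by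
  obtain ⟨t, ht, rfl⟩ := ha
  exact ((isUnit_iff_ne_zero.2 ht).map (Algebra.norm K)).ne_zero

lemma mul_mem_normGroup_iff {a b : K} (ha : a ∈ normGroup K L) :
    a * b ∈ normGroup K L ↔ b ∈ normGroup K L := by
  have ha0 := ne_zero_of_mem_normGroup ha
  obtain ⟨s, hs, rfl⟩ := ha
  constructor
  · rintro ⟨t, ht, htb⟩
    refine ⟨s⁻¹ * t, mul_ne_zero (inv_ne_zero hs) ht, mul_left_cancel₀ ha0 ?_⟩
    rw [← map_mul, mul_inv_cancel_left₀ hs, htb]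
  · rintro ⟨t, ht, rfl⟩
    exact ⟨s * t, mul_ne_zero hs ht, map_mul _ s t⟩

lemma pow_finrank_mem_normGroup {c : K} (hc : c ≠ 0) : c ^ finrank K L ∈ normGroup K L :=
  ⟨algebraMap K L c, by simpa using hc, Algebra.norm_algebraMap c⟩

lemma sq_mem_normGroup (hL : finrank K L = 2) {c : K} (hc : c ≠ 0) : c ^ 2 ∈ normGroup K L := by
  simpa only [hL] using pow_finrank_mem_normGroup (L := L) hc

lemma exists_notMem_normGroup_sq_sub (hL : finrank K L = 2) {y z e c : K} (hc : c ≠ 0)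
    (hy0 : y ≠ 0) (hy : y ∉ normGroup K L) (hye : y ^ 2 - e ∉ normGroup K L)
    (hz : z ∈ normGroup K L) (hze : z ^ 2 - e ∉ normGroup K L) :
    ∃ x : K, x ≠ 0 ∧ x ∉ normGroup K L ∧ x ^ 2 - c ^ 2 * e ∉ normGroup K L := by
  have hscale (w : K) (hw : w ^ 2 - e ∉ normGroup K L) :
      (c * w) ^ 2 - c ^ 2 * e ∉ normGroup K L := by
    rwa [mul_pow, ← mul_sub, mul_mem_normGroup_iff (sq_mem_normGroup hL hc)]
  by_cases hcN : c ∈ normGroup K L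
  · exact ⟨c * y, mul_ne_zero hc hy0, by rwa [mul_mem_normGroup_iff hcN], hscale y hye⟩
  · refine ⟨c * z, mul_ne_zero hc (ne_zero_of_mem_normGroup hz), ?_, hscale z hze⟩
    rwa [mul_comm, mul_mem_normGroup_iff hz]

/-- A quadratic extension `L` of `K` is the quadratic algebra `K[X]/(X² - bX - a)` of the relation
`θ² = a + bθ` satisfied by an element `θ`; the absence of roots of the relation in `K` says that `θ`
generates `L`. -/
noncomputable def quadraticAlgebraEquiv (hL : finrank K L = 2) {a b : K}
    (hab : ∀ r, r ^ 2 ≠ a + b * r) (θ : {θ : L // θ * θ = a • 1 + b • θ}) :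
    QuadraticAlgebra K a b ≃ₐ[K] L :=
  AlgEquiv.ofBijective (QuadraticAlgebra.lift θ) <| by
    have : Fact (∀ r, r ^ 2 ≠ a + b * r) := ⟨hab⟩
    have : FiniteDimensional K L := .of_finrank_eq_succ hL
    have hinj : Function.Injective (QuadraticAlgebra.lift θ) := RingHom.injective _
    exact ⟨hinj, (LinearMap.injective_iff_surjective_of_finrank_eq_finrank
      (f := (QuadraticAlgebra.lift θ).toLinearMap) (by
        rw [hL, QuadraticAlgebra.finrank_eq_two])).1 hinj⟩

lemma quadraticAlgebraEquiv_apply (hL : finrank K L = 2) {a b : K}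
    (hab : ∀ r, r ^ 2 ≠ a + b * r) (θ : {θ : L // θ * θ = a • 1 + b • θ})
    (z : QuadraticAlgebra K a b) : quadraticAlgebraEquiv hL hab θ z = z.re • 1 + z.im • (θ : L) :=
  rfl

lemma exists_eq_add_mul_of_finrank_eq_two (hL : finrank K L = 2) {a b : K}
    (hab : ∀ r, r ^ 2 ≠ a + b * r) {θ : L} (hθ : θ ^ 2 = algebraMap K L a + algebraMap K L b * θ)
    (t : L) : ∃ u v : K, t = algebraMap K L u + algebraMap K L v * θ := by
  obtain ⟨z, rfl⟩ := (quadraticAlgebraEquiv hL hab ⟨θ, by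
    rw [← sq, hθ, Algebra.smul_def, Algebra.smul_def, mul_one]⟩).surjective t
  exact ⟨z.re, z.im, by
    rw [quadraticAlgebraEquiv_apply, Algebra.smul_def, Algebra.smul_def, mul_one]⟩

lemma mem_normGroup_iff_exists_sq_sub (hL : finrank K L = 2) {d : K} (hd : ¬ IsSquare d) {s : L}
    (hs : s ^ 2 = algebraMap K L d) {x : K} :
    x ∈ normGroup K L ↔ x ≠ 0 ∧ ∃ u v : K, x = u ^ 2 - d * v ^ 2 := by
  have hroot : ∀ r, r ^ 2 ≠ d + 0 * r := by
    rintro r hr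
    exact hd ⟨r, by linear_combination -hr⟩
  let f := quadraticAlgebraEquiv hL hroot
    ⟨s, by rw [← sq, hs, Algebra.smul_def, mul_one, zero_smul, add_zero]⟩
  have hnorm (z : QuadraticAlgebra K d 0) :
      Algebra.norm K (f z) = z.re ^ 2 - d * z.im ^ 2 := by
    rw [Algebra.norm_eq_of_algEquiv]
    trans z.norm
    · exact z.det_toLinearMap_eq_norm
    · rw [QuadraticAlgebra.norm_def]
      ring
  constructor
  · intro hx
    refine ⟨ne_zero_of_mem_normGroup hx, ?_⟩
    obtain ⟨t, -, rfl⟩ := hx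
    obtain ⟨z, rfl⟩ := f.surjective t
    exact ⟨z.re, z.im, hnorm z⟩
  · rintro ⟨hx, u, v, rfl⟩
    refine ⟨_, fun h => hx ?_, hnorm ⟨u, v⟩⟩
    have : FiniteDimensional K L := .of_finrank_eq_succ hL
    rw [← hnorm ⟨u, v⟩, h, Algebra.norm_zero]

end NormGroup

section Unramified

lemma norm_sub_one_lt_one {u : ℚ_[2]} (hu : ‖u‖ = 1) : ‖u - 1‖ < 1 := by
  have hmod : PadicInt.toZMod (PadicInt.mkUnits hu : ℤ_[2]) = 1 := by
    have hone : ∀ m : ZMod 2, IsUnit m → m = 1 := by decide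
    exact hone _ ((PadicInt.mkUnits hu).isUnit.map PadicInt.toZMod)
  have hmem : (PadicInt.mkUnits hu : ℤ_[2]) - 1 ∈ IsLocalRing.maximalIdeal ℤ_[2] := by
    rw [← PadicInt.ker_toZMod, RingHom.mem_ker, map_sub, hmod, map_one, sub_self]
  exact PadicInt.mem_nonunits.1 hmem

variable {L : Type*} [Field L] {Γ : Type*} [LinearOrderedAddCommMonoidWithTop Γ]

lemma valuation_eq_zero_of_sq_eq_add_one (v : AddValuation L Γ) {φ : L} (hφ : φ ^ 2 = φ + 1) :
    v φ = 0 := by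
  have hsum : v φ + v (φ - 1) = 0 := by
    rw [← v.map_mul, ← v.map_one]
    congr 1
    linear_combination hφ
  rcases lt_trichotomy (v φ) 0 with h | h | h
  · rw [v.map_sub_eq_of_lt_left (by rwa [v.map_one])] at hsum
    exact absurd hsum ((add_le_of_nonpos_right h.le).trans_lt h).ne
  · exact h
  · rwa [v.map_sub_eq_of_lt_right (by rwa [v.map_one]), v.map_one, add_zero] at hsum

/-- The extension of `ℚ₂` by the golden ratio `φ` has residue field `𝔽₄`, so that `1`, `φ` and
`1 + φ` are units and a base scalar can be pulled out of `a + b φ`. -/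
lemma exists_valuation_eq_of_sq_eq_add_one [Algebra ℚ_[2] L] (v : AddValuation L Γ)
    (hv : ∀ x : ℚ_[2], ‖x‖ < 1 → 0 < v (algebraMap ℚ_[2] L x)) {φ : L} (hφ : φ ^ 2 = φ + 1)
    (a b : ℚ_[2]) :
    ∃ c : ℚ_[2], v (algebraMap ℚ_[2] L a + algebraMap ℚ_[2] L b * φ) =
      v (algebraMap ℚ_[2] L c) := by
  have hvφ := valuation_eq_zero_of_sq_eq_add_one v hφ
  have hvφ' : v (1 + φ) = 0 := by rw [add_comm, ← hφ, v.map_pow, hvφ, smul_zero]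
  have hunit {w z : L} (hw : v w = 0) (hz : v z = 0) {x : ℚ_[2]} (hx : ‖x‖ < 1) :
      v (w + algebraMap ℚ_[2] L x * z) = 0 := by
    rw [v.map_add_eq_of_lt_left, hw]
    rw [hw, v.map_mul, hz, add_zero]
    exact hv x hx
  rcases lt_trichotomy ‖a‖ ‖b‖ with h | h | h
  · refine ⟨b, ?_⟩
    have hb : b ≠ 0 := norm_pos_iff.1 ((norm_nonneg a).trans_lt h)
    have hfactor : algebraMap ℚ_[2] L a + algebraMap ℚ_[2] L b * φ =
        algebraMap ℚ_[2] L b * (φ + algebraMap ℚ_[2] L (a / b) * 1) := by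
      rw [mul_one, mul_add, ← map_mul, mul_div_cancel₀ a hb, add_comm]
    rw [hfactor, v.map_mul, hunit hvφ v.map_one, add_zero]
    rwa [norm_div, div_lt_one (norm_pos_iff.2 hb)]
  · refine ⟨a, ?_⟩
    rcases eq_or_ne a 0 with rfl | ha
    · rw [norm_zero, eq_comm, norm_eq_zero] at h
      simp [h]
    have hfactor : algebraMap ℚ_[2] L a + algebraMap ℚ_[2] L b * φ =
        algebraMap ℚ_[2] L a * ((1 + φ) + algebraMap ℚ_[2] L (b / a - 1) * φ) := by
      rw [← mul_div_cancel₀ b ha, mul_div_cancel_left₀ _ ha, map_mul, map_sub, map_one]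
      ring
    rw [hfactor, v.map_mul, hunit hvφ' hvφ, add_zero]
    exact norm_sub_one_lt_one (by rw [norm_div, ← h, div_self (norm_ne_zero_iff.2 ha)])
  · refine ⟨a, ?_⟩
    have ha : a ≠ 0 := norm_pos_iff.1 ((norm_nonneg b).trans_lt h)
    have hfactor : algebraMap ℚ_[2] L a + algebraMap ℚ_[2] L b * φ =
        algebraMap ℚ_[2] L a * (1 + algebraMap ℚ_[2] L (b / a) * φ) := by
      rw [mul_add, mul_one, ← mul_assoc, ← map_mul, mul_div_cancel₀ b ha]
    rw [hfactor, v.map_mul, hunit v.map_one hvφ, add_zero]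
    rwa [norm_div, div_lt_one (norm_pos_iff.2 ha)]

/-- The additive valuation with `v 0 = ⊤` underlying a normalized valuation, whose value at `0` is
unspecified. -/
noncomputable def IsNormalizedValuation.toAddValuation {p : ℕ} [Fact p.Prime] [Algebra ℚ_[p] L]
    {v : L → ℤ} (hv : IsNormalizedValuation p v) : AddValuation L (WithTop ℤ) :=
  open scoped Classical in
  AddValuation.of (fun x => if x = 0 then ⊤ else (v x : WithTop ℤ)) (by simp)
    (by
      have h := hv.1 1 1 one_ne_zero one_ne_zero
      rw [mul_one, left_eq_add] at h
      simp [h])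
    (by
      intro x y
      rcases eq_or_ne x 0 with rfl | hx
      · rw [zero_add]
        exact min_le_right _ _
      rcases eq_or_ne y 0 with rfl | hy
      · rw [add_zero]
        exact min_le_left _ _
      by_cases hxy : x + y = 0
      · simp [hxy]
      simpa [hx, hy, hxy] using hv.2.1 x y hx hy hxy)
    (by
      intro x y
      rcases eq_or_ne x 0 with rfl | hx
      · simp
      rcases eq_or_ne y 0 with rfl | hy
      · simp
      simp [hx, hy, hv.1 x y hx hy])

lemma IsNormalizedValuation.toAddValuation_apply {p : ℕ} [Fact p.Prime] [Algebra ℚ_[p] L]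
    {v : L → ℤ} (hv : IsNormalizedValuation p v) {x : L} (hx : x ≠ 0) :
    hv.toAddValuation x = (v x : WithTop ℤ) := by
  simp [toAddValuation, hx]

lemma exists_sq_eq_add_one_iff_isSquare_five {F : Type*} [Field F] [NeZero (2 : F)] :
    (∃ φ : F, φ ^ 2 = φ + 1) ↔ IsSquare (5 : F) := by
  constructor
  · rintro ⟨φ, hφ⟩
    exact ⟨2 * φ - 1, by linear_combination -4 * hφ⟩
  · rintro ⟨w, hw⟩
    refine ⟨(1 + w) / 2, ?_⟩
    field_simp
    linear_combination -hw

lemma not_isSquare_five_mul_of_ramified [Algebra ℚ_[2] L] (hL : finrank ℚ_[2] L = 2) {d : ℚ_[2]}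
    (hd : ¬ IsSquare d) {s : L} (hs : s ^ 2 = algebraMap ℚ_[2] L d) {v : L → ℤ}
    (hv : IsNormalizedValuation 2 v)
    (hram : ∀ x : ℚ_[2], x ≠ 0 → v (algebraMap ℚ_[2] L x) = 2 * x.valuation) :
    ¬ IsSquare (5 * d) := by
  intro h5d
  have hd0 : d ≠ 0 := fun h => hd (h ▸ .zero)
  have h5 : ¬ IsSquare (5 : ℚ_[2]) := fun h => hd (by simpa using h5d.div h)
  have hnoroot : ∀ x : ℚ_[2], x ^ 2 ≠ 1 + 1 * x := fun x hx =>
    h5 (exists_sq_eq_add_one_iff_isSquare_five.1 ⟨x, by rw [hx, one_mul, add_comm]⟩)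
  have h5L : IsSquare (5 : L) := by
    have hsq := (h5d.map (algebraMap ℚ_[2] L)).div (IsSquare.sq s)
    rwa [hs, ← map_div₀, mul_div_cancel_right₀ _ hd0, map_ofNat] at hsq
  have : CharZero L := charZero_of_injective_algebraMap (algebraMap ℚ_[2] L).injective
  obtain ⟨φ, hφ⟩ := exists_sq_eq_add_one_iff_isSquare_five.2 h5L
  obtain ⟨t, ht0, ht⟩ := hv.2.2.1 1
  obtain ⟨a, b, rfl⟩ := exists_eq_add_mul_of_finrank_eq_two hL hnoroot (θ := φ)
    (by rw [hφ, map_one, one_mul, add_comm]) t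
  have hpos (x : ℚ_[2]) (hx : ‖x‖ < 1) : 0 < hv.toAddValuation (algebraMap ℚ_[2] L x) := by
    rcases eq_or_ne x 0 with rfl | hx0
    · simp
    have hval : 0 < x.valuation := by
      rwa [Padic.norm_eq_zpow_neg_valuation hx0, zpow_lt_one_iff_right₀ (by norm_num),
        neg_lt_zero] at hx
    rw [hv.toAddValuation_apply (by simpa using hx0), hram x hx0, ← WithTop.coe_zero,
      WithTop.coe_lt_coe]
    exact mul_pos two_pos hval
  obtain ⟨c, hc⟩ := exists_valuation_eq_of_sq_eq_add_one hv.toAddValuation hpos hφ a b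
  have hc0 : c ≠ 0 := by
    rintro rfl
    rw [map_zero, AddValuation.map_zero, AddValuation.top_iff] at hc
    exact ht0 hc
  rw [hv.toAddValuation_apply ht0, hv.toAddValuation_apply (by simpa using hc0), ht, hram c hc0,
    WithTop.coe_inj] at hc
  lia

end Unramified

lemma isSquare_of_norm_sq_sub_lt {p : ℕ} [Fact p.Prime] {a x : ℤ_[p]}
    (hx : ‖a ^ 2 - x‖ < ‖2 * a‖ ^ 2) : IsSquare x := by
  obtain ⟨y, hy, -⟩ := hensels_lemma (F := Polynomial.X ^ 2 - Polynomial.C x) (a := a)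
    (by simpa [one_add_one_eq_two] using hx)
  refine ⟨y, ?_⟩
  simp only [map_sub, map_pow, Polynomial.aeval_X, Polynomial.aeval_C] at hy
  simpa [sq] using (sub_eq_zero.1 hy).symm

lemma isSquare_of_toZModPow_three_eq_one_s18 {x : ℤ_[2]} (hx : PadicInt.toZModPow 3 x = 1) :
    IsSquare x := by
  have hnorm : ‖1 ^ 2 - x‖ ≤ ((2 : ℕ) : ℝ) ^ (-(3 : ℕ) : ℤ) := by
    rw [PadicInt.norm_le_pow_iff_mem_span_pow, ← PadicInt.ker_toZModPow, RingHom.mem_ker, map_sub,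
      hx, one_pow, map_one, sub_self]
  have htwo : ‖(2 : ℤ_[2])‖ = 2⁻¹ := by simpa using PadicInt.norm_p (p := 2)
  refine isSquare_of_norm_sq_sub_lt (a := 1) (hnorm.trans_lt ?_)
  rw [mul_one, htwo]
  norm_num

lemma exists_eq_sq_mul_intCast_of_norm_eq_one {u : ℚ_[2]} (hu : ‖u‖ = 1) :
    ∃ r ∈ ({1, -1, 5, -5} : Finset ℤ), ∃ c : ℚ_[2], u = c ^ 2 * r := by
  have hinv : ∀ m : ZMod (2 ^ 3), IsUnit m →
      ∃ r ∈ ({1, -1, 5, -5} : Finset ℤ), r ≠ 0 ∧ (r : ZMod (2 ^ 3)) * m = 1 := by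
    decide
  obtain ⟨r, hr, hr0, hru⟩ := hinv _ ((PadicInt.mkUnits hu).isUnit.map (PadicInt.toZModPow 3))
  obtain ⟨w, hw⟩ : IsSquare ((r : ℤ_[2]) * PadicInt.mkUnits hu) :=
    isSquare_of_toZModPow_three_eq_one_s18 (by rw [map_mul, map_intCast, hru])
  have hw' : (r : ℚ_[2]) * u = w * w := by
    simpa only [PadicInt.coe_mul, PadicInt.coe_intCast, PadicInt.mkUnits_eq] using
      congrArg ((↑) : ℤ_[2] → ℚ_[2]) hw
  refine ⟨r, hr, w / r, ?_⟩
  field_simp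
  linear_combination hw'

/-- Integers representing the square classes of `ℚ₂`. -/
def squareClassRepresentatives : Finset ℤ := {1, -1, 5, -5, 2, -2, 10, -10}

lemma exists_eq_sq_mul_intCast {x : ℚ_[2]} (hx : x ≠ 0) :
    ∃ r ∈ squareClassRepresentatives, ∃ c : ℚ_[2], c ≠ 0 ∧ x = c ^ 2 * r := by
  suffices h : ∃ r ∈ squareClassRepresentatives, ∃ c : ℚ_[2], x = c ^ 2 * r by
    obtain ⟨r, hr, c, rfl⟩ := h
    exact ⟨r, hr, c, ne_zero_pow two_ne_zero (left_ne_zero_of_mul hx), rfl⟩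
  have htwo : ‖(2 : ℚ_[2])‖ = 2⁻¹ := by simpa using Padic.norm_p (p := 2)
  have hnorm : ‖x / 2 ^ x.valuation‖ = 1 := by
    rw [norm_div, norm_zpow, htwo, Padic.norm_eq_zpow_neg_valuation hx, inv_zpow', Nat.cast_ofNat,
      div_self (zpow_ne_zero _ two_ne_zero)]
  obtain ⟨r, hr, c, hc⟩ := exists_eq_sq_mul_intCast_of_norm_eq_one hnorm
  have hmem : ∀ r ∈ ({1, -1, 5, -5} : Finset ℤ),
      r ∈ squareClassRepresentatives ∧ 2 * r ∈ squareClassRepresentatives := by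
    decide
  rw [div_eq_iff (zpow_ne_zero _ two_ne_zero)] at hc
  obtain ⟨n, hn | hn⟩ := Int.even_or_odd' x.valuation
  · refine ⟨r, (hmem r hr).1, c * 2 ^ n, ?_⟩
    rw [hc, hn, mul_comm 2 n, zpow_mul, zpow_ofNat]
    ring
  · refine ⟨2 * r, (hmem r hr).2, c * 2 ^ n, ?_⟩
    rw [hc, hn, zpow_add₀ two_ne_zero, mul_comm 2 n, zpow_mul, zpow_ofNat, zpow_one]
    push_cast
    ring

lemma exists_primitive_scaling {p : ℕ} [Fact p.Prime] {ι : Type*} [Finite ι] {x : ι → ℚ_[p]}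
    (hx : x ≠ 0) :
    ∃ k : ℚ_[p], k ≠ 0 ∧ ∃ y : ι → ℤ_[p], (∀ i, x i = k * y i) ∧ ∃ i, y i = 1 := by
  obtain ⟨j, hj⟩ := Function.ne_iff.1 hx
  have : Nonempty ι := ⟨j⟩
  obtain ⟨i, hi⟩ := Finite.exists_max fun i => ‖x i‖
  have hpos : 0 < ‖x i‖ := (norm_pos_iff.2 hj).trans_le (hi j)
  have hi0 : x i ≠ 0 := norm_pos_iff.1 hpos
  refine ⟨x i, hi0, fun l => ⟨x l / x i, ?_⟩, fun l => ?_, i, ?_⟩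
  · rw [norm_div]
    exact (div_le_one hpos).2 (hi l)
  · exact (mul_div_cancel₀ (x l) hi0).symm
  · exact Subtype.ext (div_self hi0)

lemma sum_intCast_mul_pow_ne_zero_of_zmod {p : ℕ} [Fact p.Prime] {ι : Type*} [Fintype ι] (n k : ℕ)
    {a : ι → ℤ}
    (ha : ∀ y : ι → ZMod (p ^ n), ∑ i, (a i : ZMod (p ^ n)) * y i ^ k = 0 → ∀ i, y i ≠ 1)
    {x : ι → ℚ_[p]} (hx : x ≠ 0) : ∑ i, (a i : ℚ_[p]) * x i ^ k ≠ 0 := by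
  intro hsum
  obtain ⟨c, hc, y, hy, i, hi⟩ := exists_primitive_scaling hx
  have hint : ∑ i, (a i : ℤ_[p]) * y i ^ k = 0 := by
    rw [← PadicInt.coe_eq_zero, PadicInt.coe_sum]
    push_cast
    apply mul_left_cancel₀ (pow_ne_zero k hc)
    simp only [hy, mul_pow, mul_left_comm _ (c ^ k)] at hsum
    rw [Finset.mul_sum, hsum, mul_zero]
  refine ha (fun i => PadicInt.toZModPow n (y i)) ?_ i (by rw [hi, map_one])
  simpa using congrArg (PadicInt.toZModPow n) hint

/-- `a` is seen modulo `16` not to be a norm from `ℚ₂(√d)`: a congruence `a z² + d v² ≡ u²` has no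
entry with square `1`. The variables range over the squares `0, 1, 4, 9` modulo `16`, which keeps
the condition cheap to decide. -/
def IsNonNormModSixteen (a d : ℤ) : Prop :=
  ∀ p ∈ ({0, 1, 4, 9} : Finset (ZMod (2 ^ 4))), ∀ q ∈ ({0, 1, 4, 9} : Finset (ZMod (2 ^ 4))),
    a * p + d * q ∈ ({0, 1, 4, 9} : Finset (ZMod (2 ^ 4))) → p ≠ 1 ∧ q ≠ 1 ∧ a * p + d * q ≠ 1

instance (a d : ℤ) : Decidable (IsNonNormModSixteen a d) := by
  unfold IsNonNormModSixteen
  infer_instance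

lemma IsNonNormModSixteen.ne_sq_sub {a d : ℤ} (h : IsNonNormModSixteen a d) (u v : ℚ_[2]) :
    (a : ℚ_[2]) ≠ u ^ 2 - d * v ^ 2 := by
  have hsq : ∀ x : ZMod (2 ^ 4), x ^ 2 ∈ ({0, 1, 4, 9} : Finset (ZMod (2 ^ 4))) := by decide
  intro hauv
  refine sum_intCast_mul_pow_ne_zero_of_zmod 4 2 (a := ![a, d, -1]) (x := ![1, v, u]) ?_
    (fun h0 => one_ne_zero (congrFun h0 0)) ?_
  · intro y hy
    have hy2 : (a : ZMod (2 ^ 4)) * y 0 ^ 2 + d * y 1 ^ 2 = y 2 ^ 2 := by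
      simpa [Fin.sum_univ_three, ← sub_eq_add_neg, sub_eq_zero] using hy
    obtain ⟨h0, h1, h2⟩ := h _ (hsq (y 0)) _ (hsq (y 1)) (hy2 ▸ hsq (y 2))
    rw [hy2] at h2
    have hone {x : ZMod (2 ^ 4)} (hx : x ^ 2 ≠ 1) : x ≠ 1 := by
      rintro rfl
      exact hx (one_pow 2)
    intro i
    fin_cases i
    exacts [hone h0, hone h1, hone h2]
  · simp [Fin.sum_univ_three, hauv]

lemma exists_isNonNormModSixteen_sq_sub : ∀ D ∈ ({-1, -5, 2, -2, 10, -10} : Finset ℤ),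
    ∃ y ∈ ({-1, 2, -2, 6} : Finset ℤ), IsNonNormModSixteen y D ∧
      ∀ E ∈ squareClassRepresentatives, E = D ∨ IsNonNormModSixteen (-E) D ∨
        IsNonNormModSixteen (y ^ 2 - E) D ∧ IsNonNormModSixteen (D ^ 2 - E) D := by
  decide

section QuadraticExtension

variable {L : Type*} [Field L] [Algebra ℚ_[2] L]

lemma IsNonNormModSixteen.notMem_normGroup {a d : ℤ} (h : IsNonNormModSixteen a d)
    (hL : finrank ℚ_[2] L = 2) (hd : ¬ IsSquare (d : ℚ_[2])) {s : L}
    (hs : s ^ 2 = algebraMap ℚ_[2] L d) : (a : ℚ_[2]) ∉ normGroup ℚ_[2] L := by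
  intro ha
  obtain ⟨-, u, v, huv⟩ := (mem_normGroup_iff_exists_sq_sub hL hd hs).1 ha
  exact h.ne_sq_sub u v huv

lemma neg_notMem_normGroup_or_exists_of_squareClassRepresentatives (hL : finrank ℚ_[2] L = 2)
    {D E : ℤ} (hD : D ∈ squareClassRepresentatives) (hE : E ∈ squareClassRepresentatives)
    (hD1 : ¬ IsSquare (D : ℚ_[2])) (hD5 : D ≠ 5) (hED : E ≠ D) {s : L}
    (hs : s ^ 2 = algebraMap ℚ_[2] L D) {c : ℚ_[2]} (hc : c ≠ 0) :
    -(c ^ 2 * E) ∉ normGroup ℚ_[2] L ∨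
      ∃ x : ℚ_[2], x ≠ 0 ∧ x ∉ normGroup ℚ_[2] L ∧ x ^ 2 - c ^ 2 * E ∉ normGroup ℚ_[2] L := by
  have hD0 : (D : ℚ_[2]) ≠ 0 := fun h => hD1 (h ▸ .zero)
  have hD' : D ∈ ({-1, -5, 2, -2, 10, -10} : Finset ℤ) := by
    have hone : D ≠ 1 := by
      rintro rfl
      simp at hD1
    simp only [squareClassRepresentatives, Finset.mem_insert, Finset.mem_singleton] at hD ⊢
    tauto
  have hnonnorm {a : ℤ} (ha : IsNonNormModSixteen a D) : (a : ℚ_[2]) ∉ normGroup ℚ_[2] L :=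
    ha.notMem_normGroup hL hD1 hs
  have hDnorm : (-D : ℚ_[2]) ∈ normGroup ℚ_[2] L :=
    (mem_normGroup_iff_exists_sq_sub hL hD1 hs).2 ⟨neg_ne_zero.2 hD0, 0, 1, by ring⟩
  obtain ⟨y, -, hyD, htable⟩ := exists_isNonNormModSixteen_sq_sub D hD'
  have hy0 : (y : ℚ_[2]) ≠ 0 := fun h => hyD.ne_sq_sub 0 0 (by simp [h])
  rcases (htable E hE).resolve_left hED with hneg | ⟨hyE, hDE⟩
  · left
    rw [← mul_neg, mul_mem_normGroup_iff (sq_mem_normGroup hL hc)]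
    exact_mod_cast hnonnorm hneg
  · right
    refine exists_notMem_normGroup_sq_sub hL hc hy0 (hnonnorm hyD) ?_ hDnorm ?_
    · exact_mod_cast hnonnorm hyE
    · rw [neg_sq]
      exact_mod_cast hnonnorm hDE

theorem stmt_18_general {d e : ℚ_[2]} (hd : ¬ IsSquare d) (hd5 : ¬ IsSquare (5 * d))
    (hde : ¬ IsSquare (d * e)) (hL : finrank ℚ_[2] L = 2) {s : L}
    (hs : s ^ 2 = algebraMap ℚ_[2] L d) :
    -e ∉ normGroup ℚ_[2] L ∨
      ∃ x : ℚ_[2], x ≠ 0 ∧ x ∉ normGroup ℚ_[2] L ∧ x ^ 2 - e ∉ normGroup ℚ_[2] L := by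
  have hde0 : d * e ≠ 0 := fun h => hde (h ▸ .zero)
  obtain ⟨D, hD, b, hb, rfl⟩ := exists_eq_sq_mul_intCast (left_ne_zero_of_mul hde0)
  obtain ⟨E, hE, c, hc, rfl⟩ := exists_eq_sq_mul_intCast (right_ne_zero_of_mul hde0)
  have hD1 : ¬ IsSquare (D : ℚ_[2]) := fun h => hd ((IsSquare.sq b).mul h)
  have hD5 : D ≠ 5 := by
    rintro rfl
    exact hd5 ⟨5 * b, by push_cast; ring⟩
  have hED : E ≠ D := by
    rintro rfl
    exact hde ⟨b * c * E, by ring⟩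
  have hroot : (s / algebraMap ℚ_[2] L b) ^ 2 = algebraMap ℚ_[2] L D := by
    rw [div_pow, hs, ← map_pow, ← map_div₀, mul_div_cancel_left₀ _ (pow_ne_zero 2 hb)]
  exact neg_notMem_normGroup_or_exists_of_squareClassRepresentatives hL hD hE hD1 hD5 hED hroot hc

end QuadraticExtension

/-- Theorem 1.3(2), number-theoretic content: let `d, e ∈ ℚ₂*` be non-squares with
`de ∉ (ℚ₂*)²`, and suppose `L = ℚ₂(√d)` is ramified over `ℚ₂`. Then either
`-e ∉ N_{L/ℚ₂}(L*)`, or there exists `x ∈ ℚ₂*` with `x ∉ N_{L/ℚ₂}(L*)` and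
`x² - e ∉ N_{L/ℚ₂}(L*)`. -/
theorem stmt_18
    (d e : ℚ_[2]) (hd0 : d ≠ 0) (he0 : e ≠ 0)
    (hd : ¬ IsSquare d) (he : ¬ IsSquare e) (hde : ¬ IsSquare (d * e))
    (L : Type*) [Field L] [Algebra ℚ_[2] L] (hL2 : finrank ℚ_[2] L = 2)
    (hLd : ∃ s : L, s ^ 2 = algebraMap ℚ_[2] L d)
    (vL : L → ℤ) (hvL : IsNormalizedValuation 2 vL)
    (hram : ∀ x : ℚ_[2], x ≠ 0 → vL (algebraMap ℚ_[2] L x) = 2 * x.valuation) :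
    -e ∉ normGroup ℚ_[2] L ∨
      ∃ x : ℚ_[2], x ≠ 0 ∧ x ∉ normGroup ℚ_[2] L ∧ x ^ 2 - e ∉ normGroup ℚ_[2] L := by
  obtain ⟨s, hs⟩ := hLd
  exact stmt_18_general hd (not_isSquare_five_mul_of_ramified hL2 hd hs hvL hram) hde hL2 hs
end

section
/- Let p be a prime, K a finite extension of ℚ_p, and f(x) = x³ + ax² + bx + c a monic cubic polynomial irreducible over K. Fix an algebraic closure of K, let α be a root of f in it, set E = K(α), let d ∈ K* be a non-square, set L = K(√d), and let LE be the compositum of L and E. Then for every x ∈ K: x − α ∈ N_{LE/E}((LE)*) if and only if f(x) ∈ N_{L/K}(L*). In particular, for every x ∈ K with f(x) ∈ N_{L/K}(L*), the element x − α is a norm from LE to E. -/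
open Module Polynomial

/-! For a quadratic extension `M / F` with `2 ≠ 0` in `F`, the elements of norm one have the form
`y = (1 + y) ^ 2 / N (1 + y)`, apart from `y = -1`. Hence `Fˣ` and these elements generate the same
subgroup as `Fˣ` and the squares of `Mˣ`, which gives
`2 * [Mˣ : Mˣ²] * [Fˣ : N Mˣ] = [Fˣ : Fˣ²] ^ 2`. A local field `F` with ring of integers `𝒪` has
`4 * [𝒪 : 2𝒪]` square classes, and `[𝒪 : 2𝒪]` is squared under a quadratic extension; so the norm
group of a quadratic extension of local fields has index `2`.

The norm `N_{E/K}` maps norms from `LE` to norms from `L`. When `[E : K]` is odd, it is not trivial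
modulo the norms from `L`, so the preimage of the norm group of `L / K` is a proper subgroup of `Eˣ`
that contains the norm group of `LE / E`; as the latter has index `2`, the two coincide. It remains
to observe that `N_{E/K}(x - α) = f(x)`. -/

/-- The norm of `M / F` on unit groups, so that the norm group becomes a subgroup with an index. -/
noncomputable def unitsNorm (F M : Type*) [Field F] [Field M] [Algebra F M] : Mˣ →* Fˣ :=
  Units.map (Algebra.norm F)

section Quadratic

variable {F M : Type*} [Field F] [Field M] [Algebra F M]

theorem isSeparable_of_finrank_ne_zero (h : (finrank F M : F) ≠ 0) : Algebra.IsSeparable F M := by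
  have : FiniteDimensional F M := Module.finite_of_finrank_pos <|
    Nat.pos_of_ne_zero fun h0 => h (by rw [h0, Nat.cast_zero])
  refine (Algebra.isSeparable_def F M).2 fun y => ?_
  have hy : IsIntegral F y := Algebra.IsIntegral.isIntegral y
  refine (separable_iff_derivative_ne_zero (minpoly.irreducible hy)).2 fun hder => h ?_
  have hpos := minpoly.natDegree_pos hy
  have hcoeff := congrArg (coeff · ((minpoly F y).natDegree - 1)) hder
  simp only [coeff_derivative, Nat.sub_add_cancel hpos, coeff_natDegree, minpoly.monic hy,
    Monic.leadingCoeff, one_mul, coeff_zero, ← Nat.cast_add_one] at hcoeff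
  exact zero_dvd_iff.1 (hcoeff ▸ Nat.cast_dvd_cast (minpoly.degree_dvd hy))

theorem unitsNorm_map_algebraMap (x : Fˣ) :
    unitsNorm F M (Units.map (algebraMap F M) x) = x ^ finrank F M :=
  Units.ext (Algebra.norm_algebraMap (x : F))

variable (F M) [Algebra.IsQuadraticExtension F M]

theorem isGalois_of_two_ne_zero (h2 : (2 : F) ≠ 0) : IsGalois F M := by
  have : Algebra.IsSeparable F M := isSeparable_of_finrank_ne_zero <| by
    rwa [Algebra.IsQuadraticExtension.finrank_eq_two]
  infer_instance

theorem exists_conjugation (h2 : (2 : F) ≠ 0) : ∃ σ : Gal(M/F),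
    (∀ y, algebraMap F M (Algebra.norm F y) = y * σ y) ∧
    (∀ y, σ y = y → y ∈ (algebraMap F M).range) ∧ ∃ s, s ≠ 0 ∧ σ s = -s := by
  classical
  have := isGalois_of_two_ne_zero F M h2
  have hcard : Nat.card Gal(M/F) = 2 := by
    rw [IsGalois.card_aut_eq_finrank, Algebra.IsQuadraticExtension.finrank_eq_two]
  obtain ⟨σ, hσ, huniq⟩ := (Nat.card_eq_two_iff' (1 : Gal(M/F))).1 hcard
  have hcases : ∀ τ : Gal(M/F), τ = 1 ∨ τ = σ := fun τ => or_iff_not_imp_left.2 (huniq τ)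
  have huniv : (Finset.univ : Finset Gal(M/F)) = {1, σ} := by
    ext τ
    simpa using hcases τ
  have hσσ : σ * σ = 1 := by rw [← pow_two, ← hcard, pow_card_eq_one']
  refine ⟨σ, fun y => ?_, fun y hy => ?_, ?_⟩
  · rw [Algebra.norm_eq_prod_automorphisms, huniv, Finset.prod_pair hσ.symm, AlgEquiv.one_apply]
  · refine (IsGalois.mem_bot_iff_fixed y).2 fun τ => ?_
    rcases hcases τ with rfl | rfl
    exacts [rfl, hy]
  · obtain ⟨y, hy⟩ : ∃ y, σ y ≠ y := not_forall.1 fun h => hσ (AlgEquiv.ext h)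
    refine ⟨σ y - y, sub_ne_zero.2 hy, ?_⟩
    rw [map_sub, neg_sub, ← AlgEquiv.mul_apply, hσσ, AlgEquiv.one_apply]

theorem relIndex_square_comap_algebraMap (h2 : (2 : F) ≠ 0) :
    (Subgroup.square Fˣ).relIndex
      ((Subgroup.square Mˣ).comap (Units.map (algebraMap F M : F →* M))) = 2 := by
  obtain ⟨σ, -, hfix, s, hs0, hs⟩ := exists_conjugation F M h2
  have hsq (b : Fˣ) {y : M} (hy : y ∈ (algebraMap F M).range) (hyb : y * y = algebraMap F M b) :
      b ∈ Subgroup.square Fˣ := by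
    obtain ⟨x, rfl⟩ := hy
    have hx : x * x = b := (algebraMap F M).injective (by rw [map_mul, hyb])
    have hx0 : x ≠ 0 := left_ne_zero_of_mul (hx ▸ b.ne_zero)
    exact Subgroup.mem_square.2 ⟨Units.mk0 x hx0, Units.ext hx.symm⟩
  obtain ⟨d, hd⟩ := hfix (s * s) (by rw [map_mul, hs, neg_mul_neg])
  have hd0 : d ≠ 0 := by
    rintro rfl
    exact mul_ne_zero hs0 hs0 (by rw [← hd, map_zero])
  rw [Subgroup.relIndex_eq_two_iff_exists_notMem_and]
  refine ⟨Units.mk0 d hd0, ⟨Units.mk0 s hs0, Units.ext hd⟩, fun hdsq => ?_, fun b hb => ?_⟩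
  · obtain ⟨x, hx⟩ := Subgroup.mem_square.1 hdsq
    have hxs : s ^ 2 = algebraMap F M x ^ 2 := by
      rw [pow_two, ← hd, pow_two, ← map_mul, ← Units.val_mul, ← hx, Units.val_mk0]
    have hσs : σ s = s := by
      rcases sq_eq_sq_iff_eq_or_eq_neg.1 hxs with h | h <;> simp [h]
    have h2M : (2 : M) ≠ 0 := by
      rw [← map_ofNat (algebraMap F M) 2]
      exact (_root_.map_ne_zero _).2 h2
    refine mul_ne_zero h2M hs0 ?_
    linear_combination hs - hσs
  · obtain ⟨y, hy⟩ := Subgroup.mem_square.1 (Subgroup.mem_comap.1 hb)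
    have hyb : (y : M) * y = algebraMap F M b := (congrArg Units.val hy).symm
    have hσy : σ y ^ 2 = (y : M) ^ 2 := by
      rw [pow_two, pow_two, ← map_mul, hyb, AlgEquiv.commutes]
    rcases sq_eq_sq_iff_eq_or_eq_neg.1 hσy with h | h
    · exact Or.inr (hsq b (hfix _ h) hyb)
    · refine Or.inl (hsq _ (y := y * s) (hfix _ (by rw [map_mul, h, hs, neg_mul_neg])) ?_)
      rw [Units.val_mul, map_mul, Units.val_mk0, hd, ← hyb]
      ring

theorem range_algebraMap_sup_ker_unitsNorm (h2 : (2 : F) ≠ 0) :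
    (Units.map (algebraMap F M : F →* M)).range ⊔ (unitsNorm F M).ker =
      Subgroup.square Mˣ ⊔ (Units.map (algebraMap F M : F →* M)).range := by
  obtain ⟨σ, hnorm, -, -⟩ := exists_conjugation F M h2
  set ι := Units.map (algebraMap F M : F →* M) with hι
  refine le_antisymm (sup_le le_sup_right fun y hy => ?_) (sup_le (fun z hz => ?_) le_sup_left)
  · have hyσ : (y : M) * σ y = 1 := by
      rw [← hnorm, show Algebra.norm F (y : M) = 1 from congrArg Units.val hy, map_one]
    by_cases hy1 : 1 + (y : M) = 0
    · refine Subgroup.mem_sup_right ⟨-1, Units.ext ?_⟩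
      simpa [hι] using (eq_neg_of_add_eq_zero_right hy1).symm
    · set w := Units.mk0 _ hy1
      have key : y = w ^ 2 * (ι (unitsNorm F M w))⁻¹ := by
        rw [eq_mul_inv_iff_mul_eq]
        ext
        change (y : M) * algebraMap F M (Algebra.norm F (1 + (y : M))) = (1 + (y : M)) ^ 2
        rw [hnorm, map_add, map_one]
        linear_combination (1 + (y : M)) * hyσ
      rw [key]
      exact Subgroup.mul_mem_sup (Subgroup.mem_square.2 (IsSquare.sq w)) (inv_mem ⟨_, rfl⟩)
  · obtain ⟨y, rfl⟩ := Subgroup.mem_square.1 hz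
    have hker : (ι (unitsNorm F M y))⁻¹ * (y * y) ∈ (unitsNorm F M).ker := by
      rw [MonoidHom.mem_ker, map_mul, map_mul, map_inv, hι, unitsNorm_map_algebraMap,
        Algebra.IsQuadraticExtension.finrank_eq_two, pow_two, inv_mul_cancel]
    rw [← mul_inv_cancel_left (ι (unitsNorm F M y)) (y * y)]
    exact Subgroup.mul_mem_sup ⟨_, rfl⟩ hker

theorem two_mul_index_square_mul_index_range_unitsNorm (h2 : (2 : F) ≠ 0) :
    2 * ((Subgroup.square Mˣ).index * (unitsNorm F M).range.index) =
      (Subgroup.square Fˣ).index ^ 2 := by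
  set ι := Units.map (algebraMap F M : F →* M) with hι
  have hle : Subgroup.square Fˣ ≤ (Subgroup.square Mˣ).comap ι := fun x hx =>
    Subgroup.mem_square.2 ((Subgroup.mem_square.1 hx).map ι)
  have hmap : ι.range.map (unitsNorm F M) = Subgroup.square Fˣ := by
    ext x
    simp only [hι, Subgroup.mem_map, MonoidHom.mem_range, exists_exists_eq_and,
      unitsNorm_map_algebraMap, Algebra.IsQuadraticExtension.finrank_eq_two, Subgroup.mem_square,
      isSquare_iff_exists_sq]
    exact exists_congr fun _ => eq_comm
  calc 2 * ((Subgroup.square Mˣ).index * (unitsNorm F M).range.index)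
      = 2 * (((Subgroup.square Mˣ).comap ι).index *
          ((Subgroup.square Mˣ ⊔ ι.range).index * (unitsNorm F M).range.index)) := by
        rw [← Subgroup.relIndex_mul_index (le_sup_left : _ ≤ Subgroup.square Mˣ ⊔ ι.range),
          Subgroup.relIndex_sup_left, ← Subgroup.index_comap, mul_assoc]
    _ = 2 * (((Subgroup.square Mˣ).comap ι).index * (Subgroup.square Fˣ).index) := by
        rw [← hmap, Subgroup.index_map, range_algebraMap_sup_ker_unitsNorm F M h2]
    _ = (Subgroup.square Fˣ).index ^ 2 := by
        rw [pow_two, ← mul_assoc, ← relIndex_square_comap_algebraMap F M h2,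
          Subgroup.relIndex_mul_index hle]

end Quadratic

section SquareClasses

theorem index_range_eq_card_ker_mul_index_range {G A : Type*} [CommGroup G] [Group A] {f : G →* G}
    {g : A →* A} (hg : Function.Injective g) {φ : A →* G} (hφ : Function.Injective φ)
    (hcomm : f.comp φ = φ.comp g) [φ.range.FiniteIndex] :
    f.range.index = Nat.card f.ker * g.range.index := by
  have hdisj : φ.range ⊓ f.ker = ⊥ := by
    rw [eq_bot_iff]
    rintro _ ⟨⟨a, rfl⟩, ha⟩
    have hga : φ (g a) = 1 := (DFunLike.congr_fun hcomm a).symm.trans ha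
    rw [Subgroup.mem_bot, (injective_iff_map_eq_one' φ).1 hφ]
    exact (injective_iff_map_eq_one g).1 hg a ((injective_iff_map_eq_one φ).1 hφ _ hga)
  have hker : Nat.card f.ker * (φ.range ⊔ f.ker).index = φ.range.index := by
    rw [← Subgroup.relIndex_mul_index (le_sup_left : φ.range ≤ φ.range ⊔ f.ker),
      Subgroup.relIndex_sup_left, ← Subgroup.inf_relIndex_right, hdisj,
      Subgroup.relIndex_bot_left]
  have hmap : (φ.range ⊔ f.ker).index * f.range.index = φ.range.index * g.range.index := by
    rw [← Subgroup.index_map, MonoidHom.map_range, hcomm, MonoidHom.range_comp,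
      Subgroup.index_map_of_injective _ hφ, mul_comm]
  have h0 : (φ.range ⊔ f.ker).index ≠ 0 :=
    right_ne_zero_of_mul (hker.trans_ne Subgroup.FiniteIndex.index_ne_zero)
  refine mul_left_cancel₀ h0 ?_
  rw [hmap, ← hker]
  ring

variable {G A : Type*} [CommGroup G] [CommGroup A]

variable (G) in
theorem range_powMonoidHom_two : (powMonoidHom 2 : G →* G).range = Subgroup.square G := by
  ext x
  simp [Subgroup.mem_square, isSquare_iff_exists_sq, eq_comm]

theorem index_square_eq_card_ker_mul (hA : Function.Injective fun a : A => a ^ 2) {φ : A →* G}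
    (hφ : Function.Injective φ) [φ.range.FiniteIndex] :
    (Subgroup.square G).index =
      Nat.card (powMonoidHom 2 : G →* G).ker * (Subgroup.square A).index := by
  rw [← range_powMonoidHom_two, ← range_powMonoidHom_two]
  exact index_range_eq_card_ker_mul_index_range hA hφ (MonoidHom.ext fun a => (map_pow φ a 2).symm)

variable (G A) in
theorem index_square_prod :
    (Subgroup.square (G × A)).index = (Subgroup.square G).index * (Subgroup.square A).index := by
  rw [← Subgroup.index_prod]
  congr 1
  ext ⟨g, a⟩
  simp [Subgroup.mem_prod, Subgroup.mem_square, IsSquare]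

theorem index_square_multiplicative_int : (Subgroup.square (Multiplicative ℤ)).index = 2 := by
  rw [Subgroup.index_eq_two_iff_exists_notMem_and]
  refine ⟨Multiplicative.ofAdd 1, fun h => ?_, fun b => ?_⟩
  · exact Int.not_even_one (isSquare_ofAdd_iff.1 (Subgroup.mem_square.1 h))
  · simp only [Subgroup.mem_square, ← even_toAdd_iff, toAdd_mul, toAdd_ofAdd, Int.even_add_one]
    exact (em _).symm

theorem card_ker_powMonoidHom_two_units {F : Type*} [Field F] (h2 : (2 : F) ≠ 0) :
    Nat.card (powMonoidHom 2 : Fˣ →* Fˣ).ker = 2 := by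
  have hset : ((powMonoidHom 2 : Fˣ →* Fˣ).ker : Set Fˣ) = {1, -1} := by
    ext x
    rw [SetLike.mem_coe, MonoidHom.mem_ker, powMonoidHom_apply, Units.ext_iff,
      Units.val_pow_eq_pow_val, Units.val_one, sq_eq_one_iff]
    simp only [Set.mem_insert_iff, Set.mem_singleton_iff, Units.ext_iff, Units.val_one,
      Units.val_neg]
  have hne : (1 : Fˣ) ≠ -1 := fun h => h2 <| by
    have h' : (1 : F) = -1 := congrArg Units.val h
    linear_combination h'
  rw [← SetLike.coe_sort_coe, hset, Nat.card_coe_set_eq, Set.ncard_pair hne]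

theorem index_even_congr {A B : Type*} [AddCommGroup A] [AddCommGroup B] (e : A ≃+ B) :
    (AddSubgroup.even A).index = (AddSubgroup.even B).index := by
  rw [← AddSubgroup.index_map_equiv _ e]
  congr 1
  ext b
  exact ⟨fun ⟨a, ha, hab⟩ => hab ▸ ha.map e,
    fun hb => ⟨e.symm b, hb.map e.symm, e.apply_symm_apply b⟩⟩

theorem index_even_pi (A ι : Type*) [AddCommGroup A] [Fintype ι] :
    (AddSubgroup.even (ι → A)).index = (AddSubgroup.even A).index ^ Fintype.card ι := by
  rw [← Finset.card_univ, ← Finset.prod_const, ← AddSubgroup.index_pi]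
  congr 1
  ext x
  simp only [AddSubgroup.mem_even, AddSubgroup.mem_pi, Set.mem_univ, forall_const, Even,
    Classical.skolem, funext_iff, Pi.add_apply]

theorem index_even_eq_pow_finrank (R A : Type*) [CommRing R] [Nontrivial R] [AddCommGroup A]
    [Module R A] [Module.Free R A] [Module.Finite R A] :
    (AddSubgroup.even A).index = (AddSubgroup.even R).index ^ finrank R A := by
  rw [index_even_congr (Module.finBasis R A).equivFun.toAddEquiv, index_even_pi, Fintype.card_fin]

end SquareClasses

theorem finiteIndex_of_isOpen_of_isCompact {G : Type*} [Group G] [TopologicalSpace G]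
    [SeparatelyContinuousMul G] {H : Subgroup G} (hH : IsOpen (H : Set G)) {S : Set G}
    (hS : IsCompact S) (hSH : ∀ g, ∃ s ∈ S, s⁻¹ * g ∈ H) : H.FiniteIndex := by
  have := QuotientGroup.discreteTopology hH
  have hfin : ((QuotientGroup.mk : G → G ⧸ H) '' S).Finite :=
    (hS.image QuotientGroup.continuous_mk).finite_of_discrete
  have huniv : (QuotientGroup.mk : G → G ⧸ H) '' S = Set.univ := by
    refine Set.eq_univ_of_forall fun q => ?_
    obtain ⟨g, rfl⟩ := QuotientGroup.mk_surjective q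
    obtain ⟨s, hs, hsg⟩ := hSH g
    exact ⟨s, hs, QuotientGroup.eq.2 hsg⟩
  rw [huniv, Set.finite_univ_iff] at hfin
  exact Subgroup.finiteIndex_of_finite_quotient

section LocalField

open scoped NormedField Valued

section CongruenceUnits

variable {F : Type*}

section NormedField

variable [NormedField F] [IsUltrametricDist F]

theorem norm_eq_one_of_norm_sub_one_lt_one {x : F} (hx : ‖x - 1‖ < 1) : ‖x‖ = 1 := by
  have h := IsUltrametricDist.norm_eq_of_add_norm_lt_max (x := x) (y := -1) <| by
    rw [← sub_eq_add_neg, norm_neg, norm_one]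
    exact hx.trans_le (le_max_right _ _)
  rw [h, norm_neg, norm_one]

/-- The group of units `u` of the valuation ring of `F` with `u ≡ 1` modulo `t`. -/
def congruenceUnits (t : F) : Subgroup Fˣ where
  carrier := {u | ‖(u : F)‖ = 1 ∧ ‖(u : F) - 1‖ ≤ ‖t‖}
  one_mem' := by simp
  mul_mem' {u v} hu hv := by
    refine ⟨by rw [Units.val_mul, norm_mul, hu.1, hv.1, one_mul], ?_⟩
    have h : ((u * v : Fˣ) : F) - 1 = u * (v - 1) + (u - 1) := by push_cast; ring
    rw [h]
    refine (IsUltrametricDist.norm_add_le_max _ _).trans (max_le ?_ hu.2)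
    rw [norm_mul, hu.1, one_mul]
    exact hv.2
  inv_mem' {u} hu := by
    refine ⟨by rw [Units.val_inv_eq_inv_val, norm_inv, hu.1, inv_one], ?_⟩
    have h : ((u⁻¹ : Fˣ) : F) - 1 = -((u⁻¹ : Fˣ) * (u - 1) : F) := by
      rw [mul_sub, Units.inv_mul]; ring
    rw [h, norm_neg, norm_mul, Units.val_inv_eq_inv_val, norm_inv, hu.1, inv_one, one_mul]
    exact hu.2

theorem mem_congruenceUnits_iff {t : F} (ht : ‖t‖ < 1) {u : Fˣ} :
    u ∈ congruenceUnits t ↔ ‖(u : F) - 1‖ ≤ ‖t‖ :=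
  ⟨fun hu => hu.2, fun hu => ⟨norm_eq_one_of_norm_sub_one_lt_one (hu.trans_lt ht), hu⟩⟩

theorem exists_congruenceUnits_eq_one_add_mul {t x : F} (ht : ‖t‖ < 1) (hx : ‖x‖ ≤ 1) :
    ∃ u : congruenceUnits t, ((u : Fˣ) : F) = 1 + t * x := by
  have hle : ‖1 + t * x - 1‖ ≤ ‖t‖ := by
    rw [add_sub_cancel_left, norm_mul]
    exact mul_le_of_le_one_right (norm_nonneg _) hx
  have hne : 1 + t * x ≠ 0 := by
    rw [← norm_pos_iff, norm_eq_one_of_norm_sub_one_lt_one (hle.trans_lt ht)]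
    exact one_pos
  exact ⟨⟨Units.mk0 _ hne, (mem_congruenceUnits_iff ht).2 hle⟩, rfl⟩

theorem exists_add_mul_sq_eq [CompleteSpace F] {b c : F} (hb : ‖b‖ ≤ 1) (hc : ‖c‖ < 1) :
    ∃ y : F, ‖y‖ ≤ 1 ∧ y + c * y ^ 2 = b := by
  have hmaps : Set.MapsTo (fun y => b - c * y ^ 2) (Metric.closedBall 0 1)
      (Metric.closedBall 0 1) := by
    intro y hy
    rw [mem_closedBall_zero_iff] at hy ⊢
    change ‖b - c * y ^ 2‖ ≤ 1
    rw [sub_eq_add_neg]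
    refine (IsUltrametricDist.norm_add_le_max _ _).trans (max_le hb ?_)
    rw [norm_neg, norm_mul, norm_pow]
    exact mul_le_one₀ hc.le (by positivity) (pow_le_one₀ (norm_nonneg _) hy)
  have hcontr : ContractingWith ‖c‖₊ (hmaps.restrict _ _ _) := by
    refine ⟨by exact_mod_cast hc, LipschitzWith.of_dist_le_mul ?_⟩
    rintro ⟨y, hy⟩ ⟨z, hz⟩
    rw [mem_closedBall_zero_iff] at hy hz
    change dist (b - c * y ^ 2) (b - c * z ^ 2) ≤ ‖c‖ * dist y z
    have h : b - c * y ^ 2 - (b - c * z ^ 2) = -(c * (y - z) * (y + z)) := by ring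
    rw [dist_eq_norm, dist_eq_norm, h, norm_neg, norm_mul, norm_mul]
    exact mul_le_of_le_one_right (by positivity)
      ((IsUltrametricDist.norm_add_le_max _ _).trans (max_le hy hz))
  obtain ⟨y, hy, hfix, -⟩ := hcontr.exists_fixedPoint' Metric.isClosed_closedBall.isComplete
    hmaps (x := 0) (by simp) (edist_ne_top _ _)
  refine ⟨y, mem_closedBall_zero_iff.1 hy, ?_⟩
  have hy' : b - c * y ^ 2 = y := hfix
  linear_combination -hy'

variable {t : F}

theorem norm_lt_one_of_lt_norm_two (ht2 : ‖t‖ < ‖(2 : F)‖) : ‖t‖ < 1 :=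
  ht2.trans_le (mod_cast IsUltrametricDist.norm_natCast_le_one F 2)

theorem isSquare_congruenceUnits_iff [CompleteSpace F] (ht0 : t ≠ 0) (ht2 : ‖t‖ < ‖(2 : F)‖)
    {u : congruenceUnits t} : IsSquare u ↔ ‖((u : Fˣ) : F) - 1‖ ≤ ‖2 * t‖ := by
  constructor
  · rintro ⟨v, rfl⟩
    have h : ((v * v : congruenceUnits t) : Fˣ) - (1 : F) =
        ((v : Fˣ) - 1) * ((v : Fˣ) - 1) + 2 * ((v : Fˣ) - 1) := by push_cast; ring
    rw [h, norm_mul 2 t]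
    refine (IsUltrametricDist.norm_add_le_max _ _).trans (max_le ?_ ?_) <;> rw [norm_mul]
    exacts [mul_le_mul (v.2.2.trans ht2.le) v.2.2 (norm_nonneg _) (norm_nonneg _),
      mul_le_mul_of_nonneg_left v.2.2 (norm_nonneg _)]
  · intro hu
    have h2 : (2 : F) ≠ 0 := norm_pos_iff.1 ((norm_nonneg t).trans_lt ht2)
    -- For `v = 1 + t * y`, the equation `v ^ 2 = u` is `y + (t / 2) * y ^ 2 = (u - 1) / (2 * t)`.
    obtain ⟨y, hy, hyb⟩ := exists_add_mul_sq_eq (b := (((u : Fˣ) : F) - 1) / (2 * t)) (c := t / 2)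
      (by rw [norm_div]; exact div_le_one_of_le₀ hu (norm_nonneg _))
      (by rwa [norm_div, div_lt_one (norm_pos_iff.2 h2)])
    obtain ⟨v, hv⟩ := exists_congruenceUnits_eq_one_add_mul (norm_lt_one_of_lt_norm_two ht2) hy
    refine ⟨v, Subtype.ext (Units.ext ?_)⟩
    rw [Subgroup.coe_mul, Units.val_mul, hv]
    field_simp at hyb
    linear_combination -hyb

theorem sq_injective_congruenceUnits (ht2 : ‖t‖ < ‖(2 : F)‖) :
    Function.Injective fun u : congruenceUnits t => u ^ 2 := by
  refine (injective_iff_map_eq_one (powMonoidHom 2 : congruenceUnits t →* _)).2 fun u hu =>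
    Subtype.ext (Units.ext ?_)
  have hu' : ((u : Fˣ) : F) ^ 2 = 1 := congrArg (fun w : congruenceUnits t => ((w : Fˣ) : F)) hu
  refine (sq_eq_one_iff.1 hu').resolve_right fun hneg => ht2.not_ge ?_
  have h2 : ‖(-1 : F) - 1‖ ≤ ‖t‖ := hneg ▸ u.2.2
  rwa [← neg_add', norm_neg, one_add_one_eq_two] at h2

end NormedField

section IntegerRing

variable [NontriviallyNormedField F] [IsUltrametricDist F]

theorem even_integer_iff (h2 : (2 : F) ≠ 0) {x : 𝒪[F]} : Even x ↔ ‖(x : F)‖ ≤ ‖(2 : F)‖ := by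
  rw [even_iff_two_dvd]
  constructor
  · rintro ⟨y, rfl⟩
    push_cast
    rw [norm_mul]
    exact mul_le_of_le_one_right (norm_nonneg _) (Valued.integer.mem_iff.1 y.2)
  · intro hx
    have hy : ‖(x : F) / 2‖ ≤ 1 := by
      rw [norm_div]
      exact div_le_one_of_le₀ hx (norm_nonneg _)
    exact ⟨⟨x / 2, Valued.integer.mem_iff.2 hy⟩, Subtype.ext (mul_div_cancel₀ _ h2).symm⟩

variable (F) in
theorem compactSpace_integer [ProperSpace F] : CompactSpace 𝒪[F] := by
  have h : (𝒪[F] : Set F) = Metric.closedBall 0 1 := by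
    ext x
    rw [SetLike.mem_coe, Valued.integer.mem_iff, mem_closedBall_zero_iff]
  exact isCompact_iff_compactSpace.1 (h ▸ isCompact_closedBall (0 : F) 1)

variable (F) in
theorem index_even_integer_ne_zero [ProperSpace F] (h2 : (2 : F) ≠ 0) :
    (AddSubgroup.even 𝒪[F]).index ≠ 0 := by
  have : CompactSpace 𝒪[F] := compactSpace_integer F
  have hopen : IsOpen (AddSubgroup.even 𝒪[F] : Set 𝒪[F]) := by
    refine AddSubgroup.isOpen_of_mem_nhds _ (g := 0) ?_
    filter_upwards [Metric.ball_mem_nhds (0 : 𝒪[F]) (norm_pos_iff.2 h2)] with x hx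
    exact (even_integer_iff h2).2 (mem_ball_zero_iff.1 hx).le
  have := AddSubgroup.quotient_finite_of_isOpen _ hopen
  exact AddSubgroup.index_ne_zero_of_finite

variable {t : F}

theorem congruenceUnits_sub_one_div_mem_integer (u : congruenceUnits t) :
    (((u : Fˣ) : F) - 1) / t ∈ 𝒪[F] := by
  rw [Valued.integer.mem_iff, norm_div]
  exact div_le_one_of_le₀ u.2.2 (norm_nonneg _)

/-- The homomorphism sending a unit `u = 1 + t * x`, with `x` integral, to the class of `x`
modulo `2`; the product rule needs `t` to be divisible by `2`. -/
noncomputable def leadingCoeffModTwo (ht0 : t ≠ 0) (ht2 : ‖t‖ < ‖(2 : F)‖) :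
    congruenceUnits t →* Multiplicative (𝒪[F] ⧸ AddSubgroup.even 𝒪[F]) :=
  MonoidHom.mk' (fun u => .ofAdd (QuotientAddGroup.mk
      ⟨(((u : Fˣ) : F) - 1) / t, congruenceUnits_sub_one_div_mem_integer u⟩)) fun u v => by
    have h2 : (2 : F) ≠ 0 := norm_pos_iff.1 ((norm_nonneg t).trans_lt ht2)
    rw [← ofAdd_add, ← QuotientAddGroup.mk_add]
    refine congrArg Multiplicative.ofAdd (QuotientAddGroup.eq.2 ((even_integer_iff h2).2 ?_)).symm
    have h : -((((u : Fˣ) : F) - 1) / t + (((v : Fˣ) : F) - 1) / t) +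
        (((u * v : congruenceUnits t) : Fˣ) - 1 : F) / t =
          (((u : Fˣ) : F) - 1) / t * (((v : Fˣ) : F) - 1) := by
      push_cast
      field_simp
      ring
    change ‖-((((u : Fˣ) : F) - 1) / t + (((v : Fˣ) : F) - 1) / t) +
        (((u * v : congruenceUnits t) : Fˣ) - 1 : F) / t‖ ≤ _
    rw [h, norm_mul]
    exact (mul_le_of_le_one_left (norm_nonneg _) (Valued.integer.mem_iff.1
      (congruenceUnits_sub_one_div_mem_integer u))).trans (v.2.2.trans ht2.le)

theorem leadingCoeffModTwo_surjective (ht0 : t ≠ 0) (ht2 : ‖t‖ < ‖(2 : F)‖) :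
    Function.Surjective (leadingCoeffModTwo ht0 ht2) := by
  intro q
  obtain ⟨x, hx⟩ := QuotientAddGroup.mk_surjective q.toAdd
  obtain ⟨u, hu⟩ := exists_congruenceUnits_eq_one_add_mul (norm_lt_one_of_lt_norm_two ht2)
    (Valued.integer.mem_iff.1 x.2)
  refine ⟨u, Multiplicative.toAdd.injective (Eq.trans ?_ hx)⟩
  refine congrArg QuotientAddGroup.mk (Subtype.ext ?_)
  change (((u : Fˣ) : F) - 1) / t = x
  rw [hu, add_sub_cancel_left, mul_div_cancel_left₀ _ ht0]

theorem ker_leadingCoeffModTwo [CompleteSpace F] (ht0 : t ≠ 0) (ht2 : ‖t‖ < ‖(2 : F)‖) :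
    (leadingCoeffModTwo ht0 ht2).ker = Subgroup.square (congruenceUnits t) := by
  have h2 : (2 : F) ≠ 0 := norm_pos_iff.1 ((norm_nonneg t).trans_lt ht2)
  ext u
  rw [Subgroup.mem_square, isSquare_congruenceUnits_iff ht0 ht2, norm_mul,
    ← div_le_iff₀ (norm_pos_iff.2 ht0), ← norm_div]
  exact (QuotientAddGroup.eq_zero_iff _).trans (even_integer_iff h2)

theorem index_square_congruenceUnits [CompleteSpace F] (ht0 : t ≠ 0) (ht2 : ‖t‖ < ‖(2 : F)‖) :
    (Subgroup.square (congruenceUnits t)).index = (AddSubgroup.even 𝒪[F]).index := by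
  rw [← ker_leadingCoeffModTwo ht0 ht2, Subgroup.index_ker,
    MonoidHom.range_eq_top.2 (leadingCoeffModTwo_surjective ht0 ht2), Subgroup.card_top]
  rfl

/-- The homomorphism `(k, u) ↦ t ^ k * u`. For `0 < ‖t‖ < 1` in a local field it is injective with
image of finite index, which reduces counting square classes to `congruenceUnits t`. -/
noncomputable def zpowMulCongruenceUnit (t : F) (ht0 : t ≠ 0) :
    Multiplicative ℤ × congruenceUnits t →* Fˣ :=
  (zpowersHom Fˣ (Units.mk0 t ht0)).coprod (congruenceUnits t).subtype

theorem zpowMulCongruenceUnit_apply (ht0 : t ≠ 0) (k : ℤ) (u : congruenceUnits t) :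
    zpowMulCongruenceUnit t ht0 (.ofAdd k, u) = Units.mk0 t ht0 ^ k * u := by
  simp [zpowMulCongruenceUnit]

theorem zpowMulCongruenceUnit_injective (ht0 : t ≠ 0) (ht1 : ‖t‖ < 1) :
    Function.Injective (zpowMulCongruenceUnit t ht0) := by
  rw [injective_iff_map_eq_one]
  rintro ⟨k, u⟩ h
  obtain ⟨k, rfl⟩ := Multiplicative.ofAdd.surjective k
  rw [zpowMulCongruenceUnit_apply] at h
  have hn : ‖t‖ ^ k = 1 := by
    simpa [u.2.1] using congrArg (fun u : Fˣ => ‖(u : F)‖) h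
  obtain rfl : k = 0 := (zpow_eq_one_iff_right₀ (norm_nonneg _) ht1.ne).1 hn
  rw [zpow_zero, one_mul] at h
  exact Prod.ext rfl (Subtype.ext h)

theorem isOpen_congruenceUnits (ht0 : t ≠ 0) (ht1 : ‖t‖ < 1) :
    IsOpen (congruenceUnits t : Set Fˣ) := by
  have h : (congruenceUnits t : Set Fˣ) = Units.val ⁻¹' Metric.closedBall 1 ‖t‖ := by
    ext u
    rw [SetLike.mem_coe, mem_congruenceUnits_iff ht1, Set.mem_preimage, mem_closedBall_iff_norm]
  rw [h]
  exact (IsUltrametricDist.isOpen_closedBall _ (norm_ne_zero_iff.2 ht0)).preimage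
    Units.continuous_val

theorem isCompact_units_norm_mem_Icc [ProperSpace F] {r : ℝ} (hr : 0 < r) (R : ℝ) :
    IsCompact {u : Fˣ | ‖(u : F)‖ ∈ Set.Icc r R} := by
  rw [Units.isEmbedding_val₀.isCompact_iff]
  have h : Units.val '' {u : Fˣ | ‖(u : F)‖ ∈ Set.Icc r R} =
      Metric.closedBall 0 R ∩ {x : F | r ≤ ‖x‖} := by
    ext x
    constructor
    · rintro ⟨u, hu, rfl⟩
      exact ⟨mem_closedBall_zero_iff.2 hu.2, hu.1⟩
    · rintro ⟨hR, hr'⟩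
      exact ⟨Units.mk0 x (norm_pos_iff.1 (hr.trans_le hr')), ⟨hr', mem_closedBall_zero_iff.1 hR⟩,
        rfl⟩
  rw [h]
  exact (isCompact_closedBall 0 R).inter_right (isClosed_le continuous_const continuous_norm)

theorem finiteIndex_range_zpowMulCongruenceUnit [ProperSpace F] (ht0 : t ≠ 0) (ht1 : ‖t‖ < 1) :
    (zpowMulCongruenceUnit t ht0).range.FiniteIndex := by
  have ht : 0 < ‖t‖ := norm_pos_iff.2 ht0
  refine finiteIndex_of_isOpen_of_isCompact
    (Subgroup.isOpen_mono (H₁ := congruenceUnits t) ?_ (isOpen_congruenceUnits ht0 ht1))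
    (isCompact_units_norm_mem_Icc ht 1) fun g => ?_
  · intro u hu
    exact ⟨(.ofAdd 0, ⟨u, hu⟩), by rw [zpowMulCongruenceUnit_apply, zpow_zero, one_mul]⟩
  · obtain ⟨n, hn1, hn2⟩ := exists_mem_Ioc_zpow (norm_pos_iff.2 g.ne_zero)
      ((one_lt_inv₀ ht).2 ht1)
    have hnorm : ‖((Units.mk0 t ht0 ^ (n + 1) * g : Fˣ) : F)‖ = ‖t‖ ^ (n + 1) * ‖(g : F)‖ := by
      rw [Units.val_mul, Units.val_zpow_eq_zpow_val, norm_mul, norm_zpow, Units.val_mk0]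
    refine ⟨Units.mk0 t ht0 ^ (n + 1) * g, ⟨?_, ?_⟩, (.ofAdd (-(n + 1)), 1), ?_⟩
    · rw [inv_zpow, inv_lt_iff_one_lt_mul₀' (zpow_pos ht _)] at hn1
      rw [hnorm, zpow_add_one₀ ht.ne', mul_right_comm]
      exact le_mul_of_one_le_left ht.le hn1.le
    · rwa [inv_zpow, le_inv_comm₀ (norm_pos_iff.2 g.ne_zero) (zpow_pos ht _), ← one_div,
        le_div_iff₀ (norm_pos_iff.2 g.ne_zero), ← hnorm] at hn2
    · rw [zpowMulCongruenceUnit_apply, OneMemClass.coe_one, mul_one, zpow_neg, mul_inv,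
        inv_mul_cancel_right]

variable (F) in
theorem index_square_units [ProperSpace F] (h2 : (2 : F) ≠ 0) :
    (Subgroup.square Fˣ).index = 4 * (AddSubgroup.even 𝒪[F]).index := by
  obtain ⟨t, ht0, ht2⟩ := NormedField.exists_norm_lt F (norm_pos_iff.2 h2)
  rw [norm_pos_iff] at ht0
  have ht1 := norm_lt_one_of_lt_norm_two ht2
  have := finiteIndex_range_zpowMulCongruenceUnit ht0 ht1
  rw [index_square_eq_card_ker_mul (Function.Injective.prodMap
      (pow_left_injective two_ne_zero) (sq_injective_congruenceUnits ht2))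
      (zpowMulCongruenceUnit_injective ht0 ht1),
    card_ker_powMonoidHom_two_units h2, index_square_prod, index_square_multiplicative_int,
    index_square_congruenceUnits ht0 ht2]
  ring

end IntegerRing

end CongruenceUnits

section Extension

theorem isIntegral_integer_iff {F M : Type*} [NontriviallyNormedField F] [IsUltrametricDist F]
    [CompleteSpace F] [NormedField M] [NormedAlgebra F M] [Algebra.IsAlgebraic F M] {x : M} :
    IsIntegral 𝒪[F] x ↔ ‖x‖ ≤ 1 := by
  have hx : IsIntegral F x := Algebra.IsIntegral.isIntegral x
  rw [NormedAlgebra.norm_eq_spectralNorm F x, spectralNorm,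
    spectralValue_le_one_iff (minpoly.monic hx)]
  constructor
  · intro h n
    rw [minpoly.isIntegrallyClosed_eq_field_fractions' F h, coeff_map]
    exact Valued.integer.mem_iff.1 (Subtype.property _)
  · intro h
    have hl : minpoly F x ∈ lifts (algebraMap 𝒪[F] F) := by
      rw [lifts_iff_coeff_lifts]
      exact fun n => ⟨⟨_, Valued.integer.mem_iff.2 (h n)⟩, rfl⟩
    obtain ⟨q, hq, -, hm⟩ := lifts_and_natDegree_eq_and_monic hl (minpoly.monic hx)
    refine ⟨q, hm, ?_⟩
    rw [IsScalarTower.algebraMap_eq 𝒪[F] F M, ← eval₂_map, hq]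
    exact minpoly.aeval _ _

theorem index_even_integer_eq_pow_finrank (F M : Type*) [NontriviallyNormedField F]
    [IsUltrametricDist F] [ProperSpace F] [NontriviallyNormedField M] [IsUltrametricDist M]
    [NormedAlgebra F M] [FiniteDimensional F M] [Algebra.IsSeparable F M] :
    (AddSubgroup.even 𝒪[M]).index = (AddSubgroup.even 𝒪[F]).index ^ finrank F M := by
  have := compactSpace_integer F
  have : IsPrincipalIdealRing 𝒪[F] := Valued.integer.isPrincipalIdealRing_of_compactSpace
  have : IsTorsionFree 𝒪[F] M := IsTorsionFree.trans_faithfulSMul 𝒪[F] F M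
  have := IsIntegralClosure.module_free 𝒪[F] F M (integralClosure 𝒪[F] M)
  have := IsIntegralClosure.finite 𝒪[F] F M (integralClosure 𝒪[F] M)
  let e : 𝒪[M] ≃+ integralClosure 𝒪[F] M :=
    { toFun := fun x => ⟨x, isIntegral_integer_iff.2 (Valued.integer.mem_iff.1 x.2)⟩
      invFun := fun x => ⟨x, Valued.integer.mem_iff.2 (isIntegral_integer_iff.1 x.2)⟩
      left_inv := fun _ => rfl
      right_inv := fun _ => rfl
      map_add' := fun _ _ => rfl }
  rw [index_even_congr e, index_even_eq_pow_finrank 𝒪[F],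
    IsIntegralClosure.rank 𝒪[F] F M (integralClosure 𝒪[F] M)]

theorem index_range_unitsNorm (F M : Type*) [NontriviallyNormedField F] [IsUltrametricDist F]
    [ProperSpace F] (h2 : (2 : F) ≠ 0) [Field M] [Algebra F M] [Algebra.IsQuadraticExtension F M] :
    (unitsNorm F M).range.index = 2 := by
  let : NontriviallyNormedField M := spectralNorm.nontriviallyNormedField F M
  let : NormedAlgebra F M := spectralNorm.normedAlgebra F M
  have : IsUltrametricDist M :=
    IsUltrametricDist.isUltrametricDist_of_isNonarchimedean_norm isNonarchimedean_spectralNorm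
  have : ProperSpace M := FiniteDimensional.proper F M
  have := isGalois_of_two_ne_zero F M h2
  have h2M : (2 : M) ≠ 0 := by
    rw [← map_ofNat (algebraMap F M) 2]
    exact (_root_.map_ne_zero _).2 h2
  have hindex := two_mul_index_square_mul_index_range_unitsNorm F M h2
  rw [index_square_units F h2, index_square_units M h2M, index_even_integer_eq_pow_finrank F M,
    Algebra.IsQuadraticExtension.finrank_eq_two] at hindex
  have hne := pow_ne_zero 2 (index_even_integer_ne_zero F h2)
  refine Nat.eq_of_mul_eq_mul_left (Nat.pos_of_ne_zero hne) ?_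
  linarith

theorem index_range_unitsNorm_of_finiteDimensional (K F M : Type*) [NontriviallyNormedField K]
    [IsUltrametricDist K] [ProperSpace K] (h2 : (2 : K) ≠ 0) [Field F] [Algebra K F]
    [FiniteDimensional K F] [Field M] [Algebra F M] [Algebra.IsQuadraticExtension F M] :
    (unitsNorm F M).range.index = 2 := by
  let : NontriviallyNormedField F := spectralNorm.nontriviallyNormedField K F
  let : NormedAlgebra K F := spectralNorm.normedAlgebra K F
  have : IsUltrametricDist F :=
    IsUltrametricDist.isUltrametricDist_of_isNonarchimedean_norm isNonarchimedean_spectralNorm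
  have : ProperSpace F := FiniteDimensional.proper K F
  refine index_range_unitsNorm F M ?_
  rw [← map_ofNat (algebraMap K F) 2]
  exact (_root_.map_ne_zero _).2 h2

end Extension

end LocalField

section OddDegree

theorem eq_of_le_of_index_eq_two {G : Type*} [Group G] {A B : Subgroup G} (hA : A.index = 2)
    (hAB : A ≤ B) (hB : B ≠ ⊤) : A = B := by
  have hmul := (Subgroup.relIndex_mul_index hAB).trans hA
  have hB2 : B.index = 2 :=
    ((Nat.dvd_prime Nat.prime_two).1 ⟨_, ((mul_comm _ _).trans hmul).symm⟩).resolve_left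
      (hB ∘ Subgroup.index_eq_one.1)
  rw [hB2] at hmul
  exact hAB.antisymm (Subgroup.relIndex_eq_one.1 (by omega))

theorem val_mem_normGroup_iff {F M : Type*} [Field F] [Field M] [Algebra F M] {x : Fˣ} :
    (x : F) ∈ normGroup F M ↔ x ∈ (unitsNorm F M).range := by
  constructor
  · rintro ⟨t, ht, htx⟩
    exact ⟨Units.mk0 t ht, Units.ext htx⟩
  · rintro ⟨t, rfl⟩
    exact ⟨t, t.ne_zero, rfl⟩

theorem ne_zero_of_mem_normGroup_s19 {F M : Type*} [Field F] [Field M] [Algebra F M]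
    [FiniteDimensional F M] {x : F} (hx : x ∈ normGroup F M) : x ≠ 0 := by
  obtain ⟨t, ht, rfl⟩ := hx
  exact Algebra.norm_ne_zero_iff.2 ht

variable {K E L LE : Type*} [Field K] [Field E] [Field L] [Field LE] [Algebra K E] [Algebra K L]
  [Algebra E LE] [Algebra L LE] [Algebra K LE] [IsScalarTower K E LE] [IsScalarTower K L LE]
  [FiniteDimensional K E] [FiniteDimensional E LE]

theorem norm_mem_normGroup {x : E} (hx : x ∈ normGroup E LE) :
    Algebra.norm K x ∈ normGroup K L := by
  obtain ⟨t, ht, rfl⟩ := hx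
  have : FiniteDimensional K LE := FiniteDimensional.trans K E LE
  have : FiniteDimensional L LE := FiniteDimensional.right K L LE
  refine ⟨Algebra.norm L t, Algebra.norm_ne_zero_iff.2 ht, ?_⟩
  rw [Algebra.norm_norm, Algebra.norm_norm]

theorem norm_mem_normGroup_iff_of_odd_finrank [FiniteDimensional K L] (hodd : Odd (finrank K E))
    (hL : (unitsNorm K L).range.index = 2) (hLE : (unitsNorm E LE).range.index = 2) {x : E} :
    Algebra.norm K x ∈ normGroup K L ↔ x ∈ normGroup E LE := by
  have hle : (unitsNorm E LE).range ≤ (unitsNorm K L).range.comap (unitsNorm K E) := fun y hy =>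
    val_mem_normGroup_iff.1 (norm_mem_normGroup (val_mem_normGroup_iff.2 hy))
  have hne : (unitsNorm K L).range.comap (unitsNorm K E) ≠ ⊤ := by
    intro htop
    obtain ⟨k, hk, -⟩ := Subgroup.index_eq_two_iff_exists_notMem_and.1 hL
    have hmem : Units.map (algebraMap K E : K →* E) k ∈
      (unitsNorm K L).range.comap (unitsNorm K E) := htop ▸ Subgroup.mem_top _
    obtain ⟨m, hm⟩ := hodd
    have hk2 : k ^ 2 ∈ (unitsNorm K L).range := Subgroup.sq_mem_of_index_two hL k
    rw [Subgroup.mem_comap, unitsNorm_map_algebraMap, hm, pow_succ, pow_mul,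
      Subgroup.mul_mem_cancel_left _ (pow_mem hk2 m)] at hmem
    exact hk hmem
  rcases eq_or_ne x 0 with rfl | hx
  · rw [Algebra.norm_zero]
    exact iff_of_false (fun h => ne_zero_of_mem_normGroup_s19 h rfl)
      fun h => ne_zero_of_mem_normGroup_s19 h rfl
  · lift x to Eˣ using hx.isUnit
    rw [val_mem_normGroup_iff, eq_of_le_of_index_eq_two hLE hle hne]
    exact val_mem_normGroup_iff (x := unitsNorm K E x)

end OddDegree

theorem norm_algebraMap_sub_eq_eval {K E : Type*} [Field K] [Field E] [Algebra K E]
    [FiniteDimensional K E] {α : E} {f : K[X]} (hf : f.Monic) (hirr : Irreducible f)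
    (hdeg : f.natDegree = finrank K E) (hα : aeval α f = 0) (x : K) :
    Algebra.norm K (algebraMap K E x - α) = f.eval x := by
  have hchar : (Algebra.lmul K E α).charpoly = f := by
    refine eq_of_monic_of_dvd_of_natDegree_le hf (LinearMap.charpoly_monic _) ?_ ?_
    · rw [minpoly.eq_of_irreducible_of_monic hirr hα hf]
      exact minpoly.dvd _ _ (Algebra.aeval_self_charpoly_lmul α)
    · rw [LinearMap.charpoly_natDegree, hdeg]
  rw [← hchar, LinearMap.eval_charpoly, Algebra.norm_apply, map_sub, AlgHom.commutes]

theorem nonempty_algHom_of_sqrt {K L M : Type*} [Field K] [Field L] [Field M] [Algebra K L]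
    [Algebra K M] [Algebra.IsQuadraticExtension K L] {d : K} (hd : ¬ IsSquare d)
    (hL : ∃ s : L, s ^ 2 = algebraMap K L d) (hM : ∃ s : M, s ^ 2 = algebraMap K M d) :
    Nonempty (L →ₐ[K] M) := by
  obtain ⟨s, hs⟩ := hL
  obtain ⟨r, hr⟩ := hM
  have hint : IsIntegral K s := Algebra.IsIntegral.isIntegral s
  have hmin : X ^ 2 - C d = minpoly K s := by
    refine minpoly.eq_of_irreducible_of_monic ?_ (by simp [hs]) (monic_X_pow_sub_C d two_ne_zero)
    exact X_pow_sub_C_irreducible_of_prime Nat.prime_two fun b hb => hd ⟨b, by rw [← hb, pow_two]⟩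
  have htop : IntermediateField.adjoin K {s} = ⊤ := by
    rw [Field.primitive_element_iff_minpoly_natDegree_eq, ← hmin,
      Algebra.IsQuadraticExtension.finrank_eq_two, natDegree_X_pow_sub_C]
  have halg : Algebra.adjoin K {s} = ⊤ := by
    rw [← IntermediateField.adjoin_simple_toSubalgebra_of_isAlgebraic hint.isAlgebraic, htop,
      IntermediateField.top_toSubalgebra]
  refine ⟨(PowerBasis.ofAdjoinEqTop hint halg).lift r ?_⟩
  rw [PowerBasis.ofAdjoinEqTop_gen, ← hmin]
  simp [hr]

theorem stmt_19_general {k K E L LE : Type*} [NontriviallyNormedField k] [IsUltrametricDist k]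
    [ProperSpace k] (h2 : (2 : k) ≠ 0) [Field K] [Algebra k K] [FiniteDimensional k K]
    {f : K[X]} (hf : f.Monic) (hirr : Irreducible f) (hodd : Odd f.natDegree)
    [Field E] [Algebra K E] (hdeg : f.natDegree = finrank K E) {α : E} (hα : aeval α f = 0)
    {d : K} (hd : ¬ IsSquare d)
    [Field L] [Algebra K L] [Algebra.IsQuadraticExtension K L]
    (hLd : ∃ s : L, s ^ 2 = algebraMap K L d)
    [Field LE] [Algebra E LE] [Algebra K LE] [IsScalarTower K E LE]
    [Algebra.IsQuadraticExtension E LE] (hLEd : ∃ s : LE, s ^ 2 = algebraMap K LE d) (x : K) :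
    algebraMap K E x - α ∈ normGroup E LE ↔ f.eval x ∈ normGroup K L := by
  have : FiniteDimensional K E := Module.finite_of_finrank_pos (hdeg ▸ hodd.pos)
  let : Algebra k E := ((algebraMap K E).comp (algebraMap k K)).toAlgebra
  have : IsScalarTower k K E := IsScalarTower.of_algebraMap_eq fun _ => rfl
  have : FiniteDimensional k E := FiniteDimensional.trans k K E
  obtain ⟨φ⟩ := nonempty_algHom_of_sqrt hd hLd hLEd
  let : Algebra L LE := φ.toRingHom.toAlgebra
  have : IsScalarTower K L LE := IsScalarTower.of_algebraMap_eq fun y => (φ.commutes y).symm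
  rw [← norm_algebraMap_sub_eq_eval hf hirr hdeg hα]
  exact (norm_mem_normGroup_iff_of_odd_finrank (hdeg ▸ hodd)
    (index_range_unitsNorm_of_finiteDimensional k K L h2)
    (index_range_unitsNorm_of_finiteDimensional k E LE h2)).symm

/-- Lemma 7.1 (the irreducible cubic case): let `K` be a `p`-adic field,
`f = X³ + aX² + bX + c` irreducible over `K`, `α` a root of `f` with `E = K(α)`
(of degree 3), `d ∈ K*` a non-square, `L = K(√d)`, and `LE` the compositum of `L` and `E`
(a quadratic extension of `E` containing `√d`). Then for every `x ∈ K`: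
`x - α ∈ N_{LE/E}((LE)*)` if and only if `f(x) ∈ N_{L/K}(L*)`; in particular, if
`f(x) ∈ N_{L/K}(L*)` then `x - α` is a norm from `LE` to `E`. -/
theorem stmt_19 (p : ℕ) [Fact p.Prime]
    (K : Type*) [Field K] [Algebra ℚ_[p] K] [FiniteDimensional ℚ_[p] K]
    (a b c : K)
    (hirr : Irreducible (X ^ 3 + C a * X ^ 2 + C b * X + C c : K[X]))
    (E : Type*) [Field E] [Algebra K E] (hE3 : finrank K E = 3)
    (α : E)
    (hα : α ^ 3 + algebraMap K E a * α ^ 2 + algebraMap K E b * α + algebraMap K E c = 0)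
    (d : K) (hd0 : d ≠ 0) (hd : ¬ IsSquare d)
    (L : Type*) [Field L] [Algebra K L] (hL2 : finrank K L = 2)
    (hLd : ∃ s : L, s ^ 2 = algebraMap K L d)
    (LE : Type*) [Field LE] [Algebra E LE] [Algebra K LE] [IsScalarTower K E LE]
    (hLE2 : finrank E LE = 2)
    (hLEd : ∃ s : LE, s ^ 2 = algebraMap K LE d) :
    (∀ x : K, (algebraMap K E x - α ∈ normGroup E LE ↔
        x ^ 3 + a * x ^ 2 + b * x + c ∈ normGroup K L)) ∧
    (∀ x : K, x ^ 3 + a * x ^ 2 + b * x + c ∈ normGroup K L →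
        algebraMap K E x - α ∈ normGroup E LE) := by
  have : Algebra.IsQuadraticExtension K L := ⟨hL2⟩
  have : Algebra.IsQuadraticExtension E LE := ⟨hLE2⟩
  have hmonic : (X ^ 3 + C a * X ^ 2 + C b * X + C c).Monic := by monicity!
  have hdeg : (X ^ 3 + C a * X ^ 2 + C b * X + C c).natDegree = 3 := by compute_degree!
  have hodd : Odd (X ^ 3 + C a * X ^ 2 + C b * X + C c).natDegree := by rw [hdeg]; decide
  have hmain (x : K) : algebraMap K E x - α ∈ normGroup E LE ↔
      x ^ 3 + a * x ^ 2 + b * x + c ∈ normGroup K L := by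
    simpa using stmt_19_general (k := ℚ_[p]) two_ne_zero hmonic hirr hodd (hdeg.trans hE3.symm)
      (α := α) (by simpa using hα) hd hLd hLEd x
  exact ⟨hmain, fun x => (hmain x).2⟩
end
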